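/- arXiv:2509.23826 — 3 statements merged into one kernel-verified Lean document; each statement's English description precedes it below -/
import Mathlib

section
/- Let γ > −1, α > 0 and for k ≥ 0, n ≥ 0 set Δ_{k,n}(t) = (1/n!) ∫_{(α,∞)^n} (∏_i λ_i^k (λ_i−α)^γ) ∏_{i<j}(λ_i−λ_j)² e^{∑_i (α − λ_i − t/(2λ_i))} dλ / Γ(γ+1)^n. Then as t → −∞, Δ_{k,n}(t) ∼ e^{n|t|/(2α)} |t/(2α)|^{−n(n+γ)} · α^{n(n+k+γ)} ∏_{j=0}^{n−1} (j!)² binom(γ+j, j). -/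
open Filter

/-- Generalized binomial coefficient `binom(x, j) = Γ(x+1)/(Γ(j+1) Γ(x-j+1))`. -/
noncomputable def genBinom (x : ℝ) (j : ℕ) : ℝ :=
  Real.Gamma (x + 1) / (Real.Gamma ((j : ℝ) + 1) * Real.Gamma (x - (j : ℝ) + 1))

theorem aux_vand_sq (n : ℕ) (v : Fin n → ℝ) :
    (∏ p ∈ Finset.univ.filter (fun p : Fin n × Fin n => p.1 < p.2), (v p.1 - v p.2) ^ 2)
      = (Matrix.vandermonde v).det ^ 2 := by
  rw [Matrix.det_vandermonde, ← Finset.prod_pow, Finset.prod_filter, ← Finset.univ_product_univ,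
    Finset.prod_product]
  refine Finset.prod_congr rfl fun i _ => ?_
  rw [← Finset.prod_pow, ← Finset.prod_filter]
  refine Finset.prod_congr ?_ fun j _ => by ring
  ext j; simp

theorem aux_andreief (n : ℕ) (μ : MeasureTheory.Measure ℝ) [MeasureTheory.SigmaFinite μ]
    (v w : ℝ → ℝ) (hint : ∀ r : ℕ, MeasureTheory.Integrable (fun x => v x ^ r * w x) μ) :
    ∫ x : Fin n → ℝ, (∏ i, w (x i)) * (Matrix.vandermonde (fun i => v (x i))).det ^ 2
        ∂(MeasureTheory.Measure.pi (fun _ => μ))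
      = n.factorial * (Matrix.of (fun i j : Fin n => ∫ x, v x ^ ((i : ℕ) + j) * w x ∂μ)).det := by
  have key : ∀ x : Fin n → ℝ,
      (∏ i, w (x i)) * (Matrix.vandermonde (fun i => v (x i))).det ^ 2
      = ∑ σ : Equiv.Perm (Fin n), ∑ τ : Equiv.Perm (Fin n),
        ((Equiv.Perm.sign σ : ℤ) : ℝ) * ((Equiv.Perm.sign τ : ℤ) : ℝ) *
          ∏ i, (v (x i) ^ ((σ i : ℕ) + τ i) * w (x i)) := by
    intro x
    rw [← Matrix.det_transpose, Matrix.det_apply', sq, Finset.sum_mul_sum, Finset.mul_sum]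
    refine Finset.sum_congr rfl fun σ _ => ?_
    rw [Finset.mul_sum]
    refine Finset.sum_congr rfl fun τ _ => ?_
    simp only [Matrix.transpose_apply, Matrix.vandermonde_apply, pow_add, Finset.prod_mul_distrib]
    ring
  simp_rw [key]
  have hI : ∀ σ τ : Equiv.Perm (Fin n), MeasureTheory.Integrable
      (fun x : Fin n → ℝ => ∏ i, (v (x i) ^ ((σ i : ℕ) + τ i) * w (x i)))
      (MeasureTheory.Measure.pi (fun _ => μ)) := fun σ τ =>
    MeasureTheory.Integrable.fintype_prod
      (f := fun i y => v y ^ ((σ i : ℕ) + τ i) * w y) (fun i => hint _)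
  rw [MeasureTheory.integral_finsetSum _ (fun σ _ =>
    MeasureTheory.integrable_finsetSum _ fun τ _ => (hI σ τ).const_mul _)]
  have h2 : ∀ σ : Equiv.Perm (Fin n),
      ∫ x : Fin n → ℝ, (∑ τ : Equiv.Perm (Fin n),
        ((Equiv.Perm.sign σ : ℤ) : ℝ) * ((Equiv.Perm.sign τ : ℤ) : ℝ) *
          ∏ i, (v (x i) ^ ((σ i : ℕ) + τ i) * w (x i))) ∂(MeasureTheory.Measure.pi (fun _ => μ))
      = (Matrix.of (fun i j : Fin n => ∫ x, v x ^ ((i : ℕ) + j) * w x ∂μ)).det := by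
    intro σ
    rw [MeasureTheory.integral_finsetSum _ (fun τ _ => (hI σ τ).const_mul _)]
    set M := Matrix.of (fun i j : Fin n => ∫ x, v x ^ ((i : ℕ) + j) * w x ∂μ) with hM
    have h3 : ((Equiv.Perm.sign σ : ℤ) : ℝ) * (M.submatrix σ id).det = M.det := by
      rw [Matrix.det_permute]
      rcases Int.units_eq_one_or (Equiv.Perm.sign σ) with h | h <;> simp [h]
    rw [← h3, ← Matrix.det_transpose, Matrix.det_apply', Finset.mul_sum]
    refine Finset.sum_congr rfl fun τ _ => ?_
    rw [MeasureTheory.integral_const_mul, MeasureTheory.integral_fintype_prod_eq_prod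
      (f := fun i y => v y ^ ((σ i : ℕ) + τ i) * w y), mul_assoc]
    simp [hM]
  rw [Finset.sum_congr rfl fun σ _ => h2 σ]
  simp [Fintype.card_perm]

theorem aux_gamma_asc (x : ℝ) (hx : 0 < x) (j : ℕ) :
    Real.Gamma (x + j) = Real.Gamma x * (ascPochhammer ℝ j).eval x := by
  induction j with
  | zero => simp
  | succ j ih =>
    rw [ascPochhammer_succ_eval, ← mul_assoc, ← ih]
    push_cast
    rw [← add_assoc, Real.Gamma_add_one (by positivity)]
    ring

theorem aux_vand_fact (n : ℕ) (a : ℝ) :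
    (Matrix.vandermonde (fun i : Fin n => (i : ℝ) + a)).det
      = ∏ j ∈ Finset.range n, (j.factorial : ℝ) := by
  rw [Matrix.det_vandermonde_add]
  cases n with
  | zero => simp
  | succ n =>
    rw [Matrix.det_vandermonde_id_eq_superFactorial, ← Nat.prod_range_factorial_succ,
      Finset.prod_range_succ']
    push_cast
    simp

theorem aux_det_gamma (n : ℕ) (γ : ℝ) (hγ : -1 < γ) :
    (Matrix.of (fun i j : Fin n => Real.Gamma (γ + 1 + ((i + j : ℕ) : ℝ)))).det
      = ∏ j ∈ Finset.range n, ((j.factorial : ℝ) * Real.Gamma (γ + 1 + j)) := by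
  have : (Matrix.of (fun i j : Fin n => Real.Gamma (γ + 1 + ((i + j : ℕ) : ℝ))))
     = Matrix.of (fun i j : Fin n => Real.Gamma (γ + 1 + (i : ℕ)) *
        (Matrix.of (fun i j : Fin n => (ascPochhammer ℝ j).eval ((i : ℝ) + (γ + 1))) i j)) := by
    ext i j
    simp only [Matrix.of_apply]
    have hp : 0 < γ + 1 + ((i : ℕ) : ℝ) := by
      have : (0 : ℝ) ≤ ((i : ℕ) : ℝ) := by positivity
      linarith
    rw [show (i : ℝ) + (γ + 1) = γ + 1 + ((i : ℕ) : ℝ) by ring, ← aux_gamma_asc _ hp]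
    push_cast
    ring_nf
  rw [this, Matrix.det_mul_column, ← Matrix.det_eval_matrixOfPolynomials_eq_det_vandermonde
    (fun i : Fin n => (i : ℝ) + (γ + 1)) (fun j => ascPochhammer ℝ j)
    (fun i => ascPochhammer_natDegree _ _) (fun i => monic_ascPochhammer _ _), aux_vand_fact,
    Finset.prod_mul_distrib, mul_comm, Finset.prod_range (fun j => Real.Gamma (γ + 1 + j))]

theorem aux_vand_scale (n : ℕ) (v : Fin n → ℝ) (c : ℝ) :
    (Matrix.vandermonde (fun i => c * v i)).det ^ 2
      = c ^ (n * (n - 1)) * (Matrix.vandermonde v).det ^ 2 := by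
  have : Matrix.vandermonde (fun i => c * v i) =
      Matrix.of (fun i j : Fin n => c ^ (j : ℕ) * Matrix.vandermonde v i j) := by
    ext i j; simp [Matrix.vandermonde_apply, mul_pow]
  rw [this, Matrix.det_mul_row, mul_pow, Finset.prod_pow_eq_pow_sum, ← pow_mul,
    ← Finset.sum_range (fun i => i), Finset.sum_range_id_mul_two]

theorem aux_affine_int (f : ℝ → ℝ) (α c : ℝ) (hc : 0 < c)
    (h : MeasureTheory.IntegrableOn (fun y => f (α + c * y)) (Set.Ioi 0)) :
    MeasureTheory.IntegrableOn f (Set.Ioi α) := by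
  have h1 := (MeasureTheory.integrableOn_Ioi_comp_mul_left_iff (fun x => f (α + x)) 0 hc).1 h
  rw [mul_zero] at h1
  have mp := MeasureTheory.measurePreserving_add_left (MeasureTheory.volume : MeasureTheory.Measure ℝ) α
  have := mp.integrableOn_comp_preimage (MeasurableEquiv.addLeft α).measurableEmbedding
    (f := f) (s := Set.Ioi α)
  rw [← this]
  simpa [Function.comp_def] using h1

theorem aux_affine_val (f : ℝ → ℝ) (α c : ℝ) (hc : 0 < c) :
    ∫ x in Set.Ioi α, f x = c * ∫ y in Set.Ioi (0 : ℝ), f (α + c * y) := by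
  rw [MeasureTheory.integral_comp_mul_left_Ioi (fun x => f (α + x)) 0 hc, mul_zero]
  have mp := MeasureTheory.measurePreserving_add_left (MeasureTheory.volume : MeasureTheory.Measure ℝ) α
  have := mp.setIntegral_preimage_emb (MeasurableEquiv.addLeft α).measurableEmbedding
    f (Set.Ioi α)
  rw [← this, smul_eq_mul, ← mul_assoc, mul_inv_cancel₀ hc.ne', one_mul]
  simp

theorem aux_exp_bound (α s y : ℝ) (hα : 0 < α) (hs : 0 < s) (hy : 0 < y) :
    Real.exp (-(α * y / s) - s * y / (s + y)) ≤
      Real.exp (-(1 / 2) * y ^ (1 : ℝ)) + Real.exp (-Real.sqrt (2 * α) * y ^ (1 / 2 : ℝ)) := by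
  rcases le_total y s with h | h
  · refine le_trans (Real.exp_le_exp.2 ?_) (le_add_of_nonneg_right (Real.exp_pos _).le)
    rw [Real.rpow_one]
    have h1 : 0 ≤ α * y / s := by positivity
    have h2 : 1 / 2 * y ≤ s * y / (s + y) := by
      rw [le_div_iff₀ (by positivity)]; nlinarith
    linarith
  · refine le_trans (Real.exp_le_exp.2 ?_) (le_add_of_nonneg_left (Real.exp_pos _).le)
    rw [← Real.sqrt_eq_rpow]
    have h2 : s / 2 ≤ s * y / (s + y) := by
      rw [le_div_iff₀ (by positivity)]; nlinarith
    have h3 : Real.sqrt (2 * α) * Real.sqrt y ≤ α * y / s + s / 2 := by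
      rw [← Real.sqrt_mul (by positivity)]
      apply Real.sqrt_le_iff.2
      refine ⟨by positivity, ?_⟩
      have : α * y / s * (s / 2) = α * y / 2 := by field_simp
      nlinarith [sq_nonneg (α * y / s - s / 2)]
    linarith

noncomputable def auxF (α a : ℝ) (k : ℕ) (s y : ℝ) : ℝ :=
  y ^ a * (1 + y / s) ^ k * Real.exp (-(α * y / s) - s * y / (s + y))

noncomputable def auxB (α a : ℝ) (k : ℕ) (y : ℝ) : ℝ :=
  y ^ a * (2 ^ k * (1 + y ^ (k : ℝ))) *
   (Real.exp (-(1 / 2) * y ^ (1 : ℝ)) + Real.exp (-Real.sqrt (2 * α) * y ^ (1 / 2 : ℝ)))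

theorem auxF_le (α a : ℝ) (k : ℕ) (s y : ℝ) (hα : 0 < α) (hs : 1 ≤ s) (hy : 0 < y) :
    ‖auxF α a k s y‖ ≤ auxB α a k y := by
  have hs0 : 0 < s := by linarith
  have hF : 0 ≤ auxF α a k s y := by unfold auxF; positivity
  rw [Real.norm_of_nonneg hF]
  unfold auxF auxB
  have h1 := aux_exp_bound α s y hα hs0 hy
  have h2 : (1 + y / s) ^ k ≤ 2 ^ k * (1 + y ^ (k : ℝ)) := by
    rw [Real.rpow_natCast]
    have hys : y / s ≤ y := div_le_self hy.le hs
    have hyp : 0 ≤ y / s := by positivity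
    have hk : 0 ≤ y ^ k := by positivity
    rcases le_total y 1 with h | h
    · calc (1 + y / s) ^ k ≤ 2 ^ k := by gcongr; linarith
        _ ≤ _ := by nlinarith [pow_pos (two_pos : (0:ℝ) < 2) k]
    · calc (1 + y / s) ^ k ≤ (2 * y) ^ k := by gcongr; linarith
        _ = 2 ^ k * y ^ k := mul_pow _ _ _
        _ ≤ _ := by nlinarith [pow_pos (two_pos : (0:ℝ) < 2) k]
  gcongr

theorem auxB_int (α a : ℝ) (k : ℕ) (hα : 0 < α) (ha : -1 < a) :
    MeasureTheory.IntegrableOn (auxB α a k) (Set.Ioi 0) := by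
  have hk : (0 : ℝ) ≤ k := by positivity
  have i1 := integrableOn_rpow_mul_exp_neg_mul_rpow (p := 1) (s := a) (b := 1 / 2) ha one_pos (by norm_num)
  have i2 := integrableOn_rpow_mul_exp_neg_mul_rpow (p := 1) (s := a + k) (b := 1 / 2)
    (by linarith) one_pos (by norm_num)
  have i3 := integrableOn_rpow_mul_exp_neg_mul_rpow (p := 1 / 2) (s := a) (b := Real.sqrt (2 * α)) ha
    (by norm_num) (by positivity)
  have i4 := integrableOn_rpow_mul_exp_neg_mul_rpow (p := 1 / 2) (s := a + k)
    (b := Real.sqrt (2 * α)) (by linarith) (by norm_num) (by positivity)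
  refine MeasureTheory.IntegrableOn.congr_fun (((i1.add i2).add (i3.add i4)).const_mul (2 ^ k))
    (fun y hy => ?_) measurableSet_Ioi
  simp only [auxB, Pi.add_apply]
  rw [Real.rpow_add hy]
  ring

theorem auxF_meas (α a : ℝ) (k : ℕ) (s : ℝ) : Measurable (auxF α a k s) := by
  unfold auxF
  fun_prop

theorem auxF_int (α a : ℝ) (k : ℕ) (s : ℝ) (hα : 0 < α) (ha : -1 < a) (hs : 1 ≤ s) :
    MeasureTheory.IntegrableOn (auxF α a k s) (Set.Ioi 0) := by
  refine MeasureTheory.Integrable.mono' (auxB_int α a k hα ha)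
    (auxF_meas α a k s).aestronglyMeasurable ?_
  filter_upwards [MeasureTheory.ae_restrict_mem measurableSet_Ioi] with y hy
  exact auxF_le α a k s y hα hs hy

theorem auxF_tendsto (α a : ℝ) (k : ℕ) (hα : 0 < α) (ha : -1 < a) :
    Tendsto (fun s => ∫ y in Set.Ioi (0 : ℝ), auxF α a k s y) atTop
      (nhds (Real.Gamma (a + 1))) := by
  rw [Real.Gamma_eq_integral (by linarith)]
  refine MeasureTheory.tendsto_integral_filter_of_dominated_convergence (auxB α a k)
    (Eventually.of_forall fun s => (auxF_meas α a k s).aestronglyMeasurable) ?_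
    (auxB_int α a k hα ha) ?_
  · filter_upwards [eventually_ge_atTop 1] with s hs
    filter_upwards [MeasureTheory.ae_restrict_mem measurableSet_Ioi] with y hy
    exact auxF_le α a k s y hα hs hy
  · filter_upwards [MeasureTheory.ae_restrict_mem measurableSet_Ioi] with y hy
    have hy : 0 < y := hy
    have t1 : ∀ b : ℝ, Tendsto (fun s : ℝ => b / s) atTop (nhds 0) := fun b =>
      tendsto_const_nhds.div_atTop tendsto_id
    have t2 : Tendsto (fun s : ℝ => s * y / (s + y)) atTop (nhds y) := by
      have : Tendsto (fun s : ℝ => y / (1 + y / s)) atTop (nhds (y / (1 + 0))) :=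
        tendsto_const_nhds.div (tendsto_const_nhds.add (t1 y)) (by norm_num)
      rw [add_zero, div_one] at this
      refine this.congr' ?_
      filter_upwards [eventually_gt_atTop 0] with s hs
      field_simp
    have t3 : Tendsto (fun s => auxF α a k s y) atTop
        (nhds (y ^ a * (1 + 0) ^ k * Real.exp (-0 - y))) :=
      ((tendsto_const_nhds.mul ((tendsto_const_nhds.add (t1 y)).pow k))).mul
        ((Real.continuous_exp.tendsto _).comp (((t1 (α * y)).neg).sub t2))
    convert t3 using 2
    simp [mul_comm]

/-- one-dimensional pulled-back integrand -/
theorem aux_pull (α γ s y : ℝ) (k r : ℕ) (hα : 0 < α) (hs : 0 < s) (hy : 0 < y) (lam : ℝ)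
    (hl : lam = α + α / s * y) :
    (s / α * (lam - α)) ^ r *
      ((lam ^ k * (lam - α) ^ γ) * Real.exp (α - lam - (-(2 * α * s)) / (2 * lam)))
     = (Real.exp s * (α / s) ^ γ * α ^ k) * auxF α (γ + r) k s y := by
  have e1 : s / α * (lam - α) = y := by rw [hl]; field_simp; ring
  have e2 : lam - α = α / s * y := by rw [hl]; ring
  have e3 : lam = α * (1 + y / s) := by rw [hl]; field_simp
  have e4 : α - lam - (-(2 * α * s)) / (2 * lam) = s + (-(α * y / s) - s * y / (s + y)) := by
    rw [hl]; field_simp; ring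
  rw [e1, e4, e2, Real.exp_add, Real.mul_rpow (by positivity) hy.le, e3, mul_pow]
  unfold auxF
  rw [Real.rpow_add hy, Real.rpow_natCast]
  ring

theorem aux_moment (α γ s : ℝ) (k r : ℕ) (hα : 0 < α) (hs : 1 ≤ s) (hγ : -1 < γ) :
    MeasureTheory.IntegrableOn (fun lam => (s / α * (lam - α)) ^ r *
      ((lam ^ k * (lam - α) ^ γ) * Real.exp (α - lam - (-(2 * α * s)) / (2 * lam)))) (Set.Ioi α) ∧
    ∫ lam in Set.Ioi α, (s / α * (lam - α)) ^ r *
      ((lam ^ k * (lam - α) ^ γ) * Real.exp (α - lam - (-(2 * α * s)) / (2 * lam)))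
    = (α / s * (Real.exp s * (α / s) ^ γ * α ^ k)) *
        ∫ y in Set.Ioi (0 : ℝ), auxF α (γ + r) k s y := by
  have hs0 : 0 < s := by linarith
  have hc : 0 < α / s := by positivity
  have hr : (0 : ℝ) ≤ r := by positivity
  constructor
  · refine aux_affine_int _ α (α / s) hc ?_
    have hi := (auxF_int α (γ + r) k s hα (by linarith) hs).const_mul
        (Real.exp s * (α / s) ^ γ * α ^ k)
    refine MeasureTheory.IntegrableOn.congr_fun hi (fun y hy => ?_) measurableSet_Ioi
    exact (aux_pull α γ s y k r hα hs0 hy _ rfl).symm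
  · rw [aux_affine_val _ α (α / s) hc, mul_assoc (α / s) (Real.exp s * (α / s) ^ γ * α ^ k),
      ← MeasureTheory.integral_const_mul (Real.exp s * (α / s) ^ γ * α ^ k)]
    refine congrArg (fun z => α / s * z) ?_
    refine MeasureTheory.setIntegral_congr_fun (s := Set.Ioi (0 : ℝ)) measurableSet_Ioi
      fun y hy => ?_
    exact aux_pull α γ s y k r hα hs0 hy _ rfl

theorem aux_multi (α γ s : ℝ) (k n : ℕ) (hα : 0 < α) (hs : 1 ≤ s) (hγ : -1 < γ) :
    (∫ lam : Fin n → ℝ in Set.univ.pi (fun _ : Fin n => Set.Ioi α),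
          (∏ i, lam i ^ k * (lam i - α) ^ γ) *
            (∏ p ∈ Finset.univ.filter (fun p : Fin n × Fin n => p.1 < p.2),
              (lam p.1 - lam p.2) ^ 2) *
            Real.exp (∑ i, (α - lam i - (-(2 * α * s)) / (2 * lam i))))
    = (α / s) ^ (n * (n - 1)) * (n.factorial *
      ((α / s * (Real.exp s * (α / s) ^ γ * α ^ k)) ^ n *
      (Matrix.of (fun i j : Fin n =>
        ∫ y in Set.Ioi (0 : ℝ), auxF α (γ + ((i + j : ℕ) : ℝ)) k s y)).det)) := by
  have hs0 : 0 < s := by linarith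
  have hM := aux_andreief n (MeasureTheory.volume.restrict (Set.Ioi α))
    (fun lam => s / α * (lam - α))
    (fun lam => (lam ^ k * (lam - α) ^ γ) * Real.exp (α - lam - (-(2 * α * s)) / (2 * lam)))
    (fun r => (aux_moment α γ s k r hα hs hγ).1)
  have hdet : (Matrix.of (fun i j : Fin n =>
      ∫ lam in Set.Ioi α, (s / α * (lam - α)) ^ ((i : ℕ) + j) *
      ((lam ^ k * (lam - α) ^ γ) * Real.exp (α - lam - (-(2 * α * s)) / (2 * lam))))).det
      = (α / s * (Real.exp s * (α / s) ^ γ * α ^ k)) ^ n *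
      (Matrix.of (fun i j : Fin n =>
        ∫ y in Set.Ioi (0 : ℝ), auxF α (γ + ((i + j : ℕ) : ℝ)) k s y)).det := by
    have hsm := Matrix.det_smul (Matrix.of (fun i j : Fin n =>
        ∫ y in Set.Ioi (0 : ℝ), auxF α (γ + ((i + j : ℕ) : ℝ)) k s y))
        (α / s * (Real.exp s * (α / s) ^ γ * α ^ k))
    rw [Fintype.card_fin] at hsm
    rw [← hsm]
    congr 1
    ext i j
    simp only [Matrix.of_apply, Matrix.smul_apply, smul_eq_mul]
    exact (aux_moment α γ s k _ hα hs hγ).2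
  rw [hdet] at hM
  rw [← hM, ← MeasureTheory.integral_const_mul, MeasureTheory.volume_pi,
    MeasureTheory.Measure.restrict_pi_pi]
  congr 1
  ext lam
  rw [aux_vand_sq, aux_vand_scale n (fun i => lam i - α) (s / α), Matrix.det_vandermonde_sub,
    Real.exp_sum, Finset.prod_mul_distrib (f := fun i => lam i ^ k * (lam i - α) ^ γ)]
  have : (α / s) ^ (n * (n - 1)) * (s / α) ^ (n * (n - 1)) = 1 := by
    rw [← mul_pow]
    have : α / s * (s / α) = 1 := by field_simp
    rw [this, one_pow]
  linear_combination (-(∏ i, lam i ^ k * (lam i - α) ^ γ) * (∏ i, Real.exp (α - lam i - (-(2 * α * s)) / (2 * lam i))) * (Matrix.vandermonde lam).det ^ 2) * this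

theorem aux_const (α γ s : ℝ) (k n : ℕ) (hα : 0 < α) (hs : 0 < s) :
    (α / s) ^ (n * (n - 1)) * (α / s * (Real.exp s * (α / s) ^ γ * α ^ k)) ^ n
    = Real.exp (n * s) * s ^ (-(n : ℝ) * ((n : ℝ) + γ)) *
          α ^ ((n : ℝ) * ((n : ℝ) + (k : ℝ) + γ)) := by
  have hn : ((n * (n - 1) : ℕ) : ℝ) = (n : ℝ) * (n - 1) := by
    cases n <;> simp
  have hc : 0 < α / s := by positivity
  have e1 : (α / s) ^ (n * (n - 1)) * (α / s * (Real.exp s * (α / s) ^ γ * α ^ k)) ^ n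
      = Real.exp s ^ n * (((α / s) ^ (n * (n - 1)) * (α / s) ^ n * ((α / s) ^ γ) ^ n)
          * α ^ (k * n)) := by
    rw [pow_mul α]; ring
  have e2 : (α / s) ^ (n * (n - 1)) * (α / s) ^ n * ((α / s) ^ γ) ^ n
      = (α / s) ^ ((n : ℝ) * (n + γ)) := by
    rw [← Real.rpow_natCast, hn, ← Real.rpow_natCast, ← Real.rpow_natCast ((α / s) ^ γ),
      ← Real.rpow_mul hc.le, ← Real.rpow_add hc, ← Real.rpow_add hc]
    congr 1; ring
  rw [e1, e2, Real.div_rpow hα.le hs.le, ← Real.exp_nat_mul, neg_mul, Real.rpow_neg hs.le,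
    ← Real.rpow_natCast α, show (n : ℝ) * ((n : ℝ) + (k : ℝ) + γ)
      = (n : ℝ) * (n + γ) + ((k * n : ℕ) : ℝ) by push_cast; ring, Real.rpow_add hα]
  field_simp

theorem stmt16 (γ α : ℝ) (hγ : -1 < γ) (hα : 0 < α) (k n : ℕ)
    (Δ : ℝ → ℝ)
    (hΔ : ∀ t : ℝ, Δ t =
      (1 / ((Nat.factorial n : ℝ) * Real.Gamma (γ + 1) ^ n)) *
        ∫ lam : Fin n → ℝ in Set.univ.pi (fun _ : Fin n => Set.Ioi α),
          (∏ i, lam i ^ k * (lam i - α) ^ γ) *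
            (∏ p ∈ Finset.univ.filter (fun p : Fin n × Fin n => p.1 < p.2),
              (lam p.1 - lam p.2) ^ 2) *
            Real.exp (∑ i, (α - lam i - t / (2 * lam i)))) :
    Tendsto
      (fun t : ℝ => Δ t /
        (Real.exp ((n : ℝ) * |t| / (2 * α)) * |t / (2 * α)| ^ (-(n : ℝ) * ((n : ℝ) + γ)) *
          α ^ ((n : ℝ) * ((n : ℝ) + (k : ℝ) + γ)) *
          ∏ j ∈ Finset.range n, ((Nat.factorial j : ℝ)) ^ 2 * genBinom (γ + (j : ℝ)) j))
      atBot (nhds 1) := by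
  have hG : 0 < Real.Gamma (γ + 1) := Real.Gamma_pos_of_pos (by linarith)
  set D : ℝ := ∏ j ∈ Finset.range n, ((j.factorial : ℝ) * Real.Gamma (γ + 1 + j)) with hD
  have hDpos : 0 < D := by
    refine Finset.prod_pos fun j _ => mul_pos (by positivity) (Real.Gamma_pos_of_pos ?_)
    have : (0 : ℝ) ≤ j := by positivity
    linarith
  have hP : (∏ j ∈ Finset.range n, ((Nat.factorial j : ℝ)) ^ 2 * genBinom (γ + (j : ℝ)) j)
      = D / Real.Gamma (γ + 1) ^ n := by
    rw [hD, eq_div_iff (by positivity)]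
    conv_lhs => rw [← Finset.card_range n, ← Finset.prod_const, Finset.card_range n]
    rw [← Finset.prod_mul_distrib]
    refine Finset.prod_congr rfl fun j _ => ?_
    unfold genBinom
    rw [Real.Gamma_nat_eq_factorial, show γ + (j : ℝ) - j + 1 = γ + 1 by ring,
      show γ + (j : ℝ) + 1 = γ + 1 + j by ring]
    have : (j.factorial : ℝ) ≠ 0 := by positivity
    field_simp
  have hlim : Tendsto (fun s : ℝ => (Matrix.of (fun i j : Fin n =>
        ∫ y in Set.Ioi (0 : ℝ), auxF α (γ + ((i + j : ℕ) : ℝ)) k s y)).det / D) atTop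
      (nhds 1) := by
    have h1 : Tendsto (fun s : ℝ => Matrix.of (fun i j : Fin n =>
        ∫ y in Set.Ioi (0 : ℝ), auxF α (γ + ((i + j : ℕ) : ℝ)) k s y)) atTop
        (nhds (Matrix.of (fun i j : Fin n => Real.Gamma (γ + 1 + ((i + j : ℕ) : ℝ))))) := by
      refine tendsto_pi_nhds.2 fun i => tendsto_pi_nhds.2 fun j => ?_
      have hr : (0 : ℝ) ≤ ((i + j : ℕ) : ℝ) := by positivity
      have := auxF_tendsto α (γ + ((i + j : ℕ) : ℝ)) k hα (by linarith)
      rw [show γ + ((i + j : ℕ) : ℝ) + 1 = γ + 1 + ((i + j : ℕ) : ℝ) by ring] at this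
      exact this
    have h2 := ((Continuous.matrix_det continuous_id).tendsto _).comp h1
    have h3 := h2.div_const D
    simp only [id, aux_det_gamma n γ hγ, ← hD, div_self hDpos.ne'] at h3
    exact h3
  have hst : Tendsto (fun t : ℝ => -t / (2 * α)) atBot atTop :=
    tendsto_neg_atBot_atTop.atTop_div_const (by positivity)
  refine (hlim.comp hst).congr' ?_
  filter_upwards [hst.eventually_ge_atTop 1] with t ht
  obtain ⟨s, hs⟩ : ∃ s, s = -t / (2 * α) := ⟨_, rfl⟩
  rw [← hs] at ht
  have hs0 : 0 < s := by linarith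
  have ht2 : t = -(2 * α * s) := by rw [hs]; field_simp
  have a1 : |t / (2 * α)| = s := by
    rw [show t / (2 * α) = -s by rw [hs]; ring, abs_neg, abs_of_pos hs0]
  have a2 : (n : ℝ) * |t| / (2 * α) = n * s := by
    rw [ht2, abs_neg, abs_of_pos (by positivity)]; field_simp
  rw [Function.comp_apply, ← hs, a1, a2, hP, hΔ, ht2, aux_multi α γ s k n hα ht hγ,
    ← aux_const α γ s k n hα hs0]
  have hf : (n.factorial : ℝ) ≠ 0 := by positivity
  have hq1 : (α / s) ^ (n * (n - 1)) ≠ 0 := by positivity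
  have hq2 : (α / s * (Real.exp s * (α / s) ^ γ * α ^ k)) ^ n ≠ 0 := by positivity
  have hq3 : Real.Gamma (γ + 1) ^ n ≠ 0 := by positivity
  generalize (α / s) ^ (n * (n - 1)) = q1 at *
  generalize (α / s * (Real.exp s * (α / s) ^ γ * α ^ k)) ^ n = q2 at *
  generalize Real.Gamma (γ + 1) ^ n = q3 at *
  have hD0 := hDpos.ne'
  field_simp
end

section
/- Let γ > −1, α > 0 and define the multi-peakon data from the shifted Laguerre weight: e^{x_n} = ∑_{k=0}^{n−1} P_k(0)², ω_n = −(∑_{k=0}^{n−1} P_k(0)²)/(b_{n−1} P_{n−1}(0) P_n(0)), where P_k are the orthonormal polynomials and b_k = √((k+1)(k+γ+1)). Then as n → ∞: x_n = 4√(αn) + log(Γ(γ+1)/(8π α^{γ+1} e^α)) + O(n^{−1/2}) and ω_n = 1/(2√(αn)) + O(1/n). -/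
open Filter Asymptotics

/-- The Laguerre–Sonin polynomial `L_n^{(γ)}(z) = ∑_{k=0}^n binom(n+γ, n-k) (-z)^k / k!`. -/
noncomputable def lagP (γ : ℝ) (n : ℕ) (z : ℝ) : ℝ :=
  ∑ k ∈ Finset.range (n + 1),
    genBinom ((n : ℝ) + γ) (n - k) * (-z) ^ k / (Nat.factorial k : ℝ)

/-- The orthonormal polynomials for the shifted Laguerre weight:
`P_n(z) = ((-1)^n / h_n) L_n^{(γ)}(z - α)` with `h_n = binom(n+γ, n)^{1/2}`. -/
noncomputable def lagOrth (γ α : ℝ) (n : ℕ) (z : ℝ) : ℝ :=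
  ((-1 : ℝ) ^ n / Real.sqrt (genBinom ((n : ℝ) + γ) n)) * lagP γ n (z - α)


lemma log_lo {u : ℝ} (hu : -(1/2) ≤ u) : u - 2*u^2 ≤ Real.log (1+u) := by
  have h1 : 0 < 1 + u := by linarith
  have h := Real.one_sub_inv_le_log_of_pos h1
  have : u - 2*u^2 ≤ 1 - (1+u)⁻¹ := by
    rw [← sub_nonneg]
    have : 1 - (1+u)⁻¹ - (u - 2*u^2) = u^2 * (1 + 2*u) / (1+u) := by field_simp; ring
    rw [this]
    have : 0 ≤ 1 + 2*u := by linarith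
    positivity
  linarith

lemma log_hi {u : ℝ} (hu : -(1/2) ≤ u) : Real.log (1+u) ≤ u := by
  have := Real.log_le_sub_one_of_pos (show 0 < 1+u by linarith)
  linarith

lemma abs_log_le {u : ℝ} (hu : |u| ≤ 1/2) : |Real.log (1+u)| ≤ 2*|u| := by
  have h := abs_le.1 hu
  have h1 := log_lo h.1
  have h2 := log_hi h.1
  have h3 : u^2 ≤ (1/2) * |u| := by
    rw [← sq_abs]; nlinarith [abs_nonneg u]
  rw [abs_le]
  constructor <;> nlinarith [le_abs_self u, neg_abs_le u]

lemma wendel {x s : ℝ} (hx : 0 < x) (h0 : 0 ≤ s) (h1 : s ≤ 1) :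
    |Real.log (Real.Gamma (x+s)) - Real.log (Real.Gamma x) - s * Real.log x| ≤ 1/x := by
  have hc := Real.convexOn_log_Gamma
  have hG : ∀ t : ℝ, 0 < t → Real.log (Real.Gamma (t+1)) = Real.log t + Real.log (Real.Gamma t) := by
    intro t ht
    rw [Real.Gamma_add_one ht.ne', Real.log_mul ht.ne' (Real.Gamma_pos_of_pos ht).ne']
  have hup := hc.2 (show x ∈ Set.Ioi 0 from hx)
    (show x+1 ∈ Set.Ioi 0 by show (0:ℝ) < x+1; linarith)
    (show 0 ≤ 1-s by linarith) h0 (by ring)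
  have hlo := hc.2 (show x+s ∈ Set.Ioi 0 by show (0:ℝ) < x+s; linarith)
    (show x+s+1 ∈ Set.Ioi 0 by show (0:ℝ) < x+s+1; linarith) h0
    (show 0 ≤ 1-s by linarith) (by ring)
  simp only [smul_eq_mul, Function.comp] at hup hlo
  rw [show (1-s)*x + s*(x+1) = x+s by ring, hG x hx] at hup
  rw [show s*(x+s) + (1-s)*(x+s+1) = x+1 by ring, hG x hx, hG (x+s) (by linarith)] at hlo
  have h3 : Real.log (x+s) ≤ Real.log x + s/x := by
    have : x + s = x * (1 + s/x) := by field_simp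
    rw [this, Real.log_mul hx.ne' (by positivity)]
    have := log_hi (u := s/x) (by have : 0 ≤ s/x := by positivity
                                  linarith)
    linarith
  have h4 : (1-s)*(s/x) ≤ 1/x := by
    rw [← mul_div_assoc]; gcongr; nlinarith
  have h5 : (1-s) * Real.log (x+s) ≤ (1-s) * (Real.log x + s/x) := by
    apply mul_le_mul_of_nonneg_left h3; linarith
  have h6 : 0 < 1/x := by positivity
  rw [abs_le]
  constructor <;> nlinarith

def GR (a : ℝ) : Prop := ∃ C N : ℝ, 0 < N ∧ 0 ≤ C ∧ ∀ x : ℝ, N ≤ x →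
  |Real.log (Real.Gamma (x+a)) - Real.log (Real.Gamma x) - a * Real.log x| ≤ C/x

lemma GR_step (a x : ℝ) (hx : 0 < x) (h : 2*|a| + 1 ≤ x) :
    |(Real.log (Real.Gamma (x+(a+1))) - Real.log (Real.Gamma x) - (a+1) * Real.log x) -
    (Real.log (Real.Gamma (x+a)) - Real.log (Real.Gamma x) - a * Real.log x)| ≤ 2*|a|/x := by
  have h1 : 0 < x + a := by linarith [neg_abs_le a, abs_nonneg a]
  rw [← add_assoc, Real.Gamma_add_one h1.ne', Real.log_mul h1.ne' (Real.Gamma_pos_of_pos h1).ne']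
  have h2 : x + a = x * (1 + a/x) := by field_simp
  have h3 : 0 < 1 + a/x := by
    by_contra hh
    push Not at hh
    nlinarith
  have h4 : Real.log (x+a) = Real.log x + Real.log (1+a/x) := by
    rw [← Real.log_mul hx.ne' h3.ne', ← h2]
  rw [h4]
  have h5 : |a/x| ≤ 1/2 := by
    rw [abs_div, abs_of_pos hx, div_le_iff₀ hx]; linarith
  have h6 := abs_log_le h5
  rw [abs_div, abs_of_pos hx] at h6
  calc _ = |Real.log (1+a/x)| := by congr 1; ring
    _ ≤ _ := by rw [mul_div_assoc]; exact h6

lemma GR_up (a : ℝ) (h : GR a) : GR (a+1) := by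
  obtain ⟨C, N, hN, hC, h⟩ := h
  refine ⟨C + 2*|a|, max N (2*|a|+1), by positivity, by positivity, fun x hx => ?_⟩
  have hx1 := (le_max_left _ _).trans hx
  have hx2 := (le_max_right _ _).trans hx
  have h1 := GR_step a x (hN.trans_le hx1) hx2
  have h2 := h x hx1
  rw [add_div]
  rw [abs_le] at *
  constructor <;> linarith

lemma GR_down (a : ℝ) (h : GR (a+1)) : GR a := by
  obtain ⟨C, N, hN, hC, h⟩ := h
  refine ⟨C + 2*|a|, max N (2*|a|+1), by positivity, by positivity, fun x hx => ?_⟩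
  have hx1 := (le_max_left _ _).trans hx
  have hx2 := (le_max_right _ _).trans hx
  have h1 := GR_step a x (hN.trans_le hx1) hx2
  have h2 := h x hx1
  rw [add_div]
  rw [abs_le] at *
  constructor <;> linarith

lemma GR_all (a : ℝ) : GR a := by
  have h : ∀ m : ℤ, GR (Int.fract a + m) := by
    intro m
    induction m using Int.induction_on with
    | zero =>
      refine ⟨1, 1, one_pos, zero_le_one, fun x hx => ?_⟩
      simp only [Int.cast_zero, add_zero]
      exact wendel (by linarith) (Int.fract_nonneg a) (Int.fract_lt_one a).le
    | succ i ih =>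
      have := GR_up _ ih
      push_cast at *
      rwa [← add_assoc]
    | pred i ih =>
      apply GR_down
      push_cast at *
      convert ih using 1; ring
  have := h ⌊a⌋
  rwa [Int.fract_add_floor] at this

/-- `R(k) = Γ(k+1/2)/Γ(k+γ+1)`. -/
noncomputable def RR (γ : ℝ) (k : ℕ) : ℝ := Real.Gamma (k + 1/2) / Real.Gamma (k + γ + 1)

lemma RR_pos (γ : ℝ) (hγ : -1 < γ) (k : ℕ) : 0 < RR γ k := by
  have : (0:ℝ) ≤ k := by positivity
  exact div_pos (Real.Gamma_pos_of_pos (by linarith)) (Real.Gamma_pos_of_pos (by linarith))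

lemma RR_succ (γ : ℝ) (hγ : -1 < γ) (k : ℕ) :
    RR γ (k+1) = RR γ k * ((k+1/2)/(k+γ+1)) := by
  have : (0:ℝ) ≤ k := by positivity
  unfold RR
  push_cast
  rw [show (k:ℝ)+1+1/2 = (k+1/2)+1 by ring, show (k:ℝ)+1+γ+1 = (k+γ+1)+1 by ring,
    Real.Gamma_add_one (by positivity), Real.Gamma_add_one (by linarith)]
  rw [div_mul_div_comm]; ring

lemma RR_bound (γ : ℝ) (hγ : -1 < γ) : ∃ C : ℝ, 0 < C ∧ ∀ k : ℕ, RR γ k ≤ C * (k+1) := by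
  refine ⟨max (RR γ 0) (RR γ 1), lt_max_of_lt_left (RR_pos γ hγ 0), fun k => ?_⟩
  set C := max (RR γ 0) (RR γ 1) with hC
  have hC0 : 0 < C := lt_max_of_lt_left (RR_pos γ hγ 0)
  rcases k with _ | k
  · simp [hC]
  induction k with
  | zero =>
    have : RR γ 1 ≤ C := le_max_right _ _
    norm_num; linarith
  | succ k ih =>
    rw [RR_succ γ hγ]
    have hk : (0:ℝ) ≤ k := by positivity
    have h1 : 0 < ((k+1:ℕ):ℝ)+γ+1 := by push_cast; linarith
    rw [← mul_div_assoc, div_le_iff₀ h1]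
    have h2 : (0:ℝ) ≤ ((k+1:ℕ):ℝ)+1/2 := by positivity
    calc _ ≤ (C * (((k+1:ℕ):ℝ)+1)) * (((k+1:ℕ):ℝ)+1/2) := mul_le_mul_of_nonneg_right ih h2
      _ ≤ _ := by
        push_cast
        rw [mul_assoc, mul_assoc]
        apply mul_le_mul_of_nonneg_left _ hC0.le
        nlinarith

lemma RR_log (γ : ℝ) (hγ : -1 < γ) : ∃ C N : ℝ, 0 < N ∧ 0 ≤ C ∧ ∀ k : ℕ, N ≤ k →
    |Real.log (RR γ k) + (γ+1/2) * Real.log k| ≤ C / k := by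
  obtain ⟨C, N, hN, hC, h⟩ := GR_all (1/2)
  obtain ⟨C', N', hN', hC', h'⟩ := GR_all (γ+1)
  refine ⟨C+C', max N N', by positivity, by positivity, fun k hk => ?_⟩
  have h1 := h k ((le_max_left _ _).trans hk)
  have h2 := h' k ((le_max_right _ _).trans hk)
  have : (0:ℝ) ≤ k := by positivity
  unfold RR
  rw [Real.log_div (Real.Gamma_pos_of_pos (by linarith)).ne'
    (Real.Gamma_pos_of_pos (by linarith)).ne', add_div, add_assoc (k:ℝ)]
  rw [abs_le] at *
  constructor <;> linarith

/-- `D_n(k) = n(n-1)...(n-k+1)/n^k`. -/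
noncomputable def DD (n k : ℕ) : ℝ := (n.descFactorial k : ℝ) / (n:ℝ)^k

lemma DD_nonneg (n k : ℕ) : 0 ≤ DD n k := by unfold DD; positivity

lemma DD_le_one (n k : ℕ) : DD n k ≤ 1 := by
  unfold DD
  apply div_le_one_of_le₀ _ (by positivity)
  exact_mod_cast Nat.descFactorial_le_pow n k

lemma DD_log (n k : ℕ) (hk : 2*k ≤ n) (hn : 0 < n) :
    0 < DD n k ∧ |Real.log (DD n k) + (k:ℝ)^2/(2*n)| ≤ k/(2*n) + 2*(k:ℝ)^3/n^2 := by
  have hn' : (0:ℝ) < n := by exact_mod_cast hn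
  suffices h : 0 < DD n k ∧ Real.log (DD n k) + (k:ℝ)^2/(2*n) ≤ k/(2*n) ∧
      -(2*(k:ℝ)^3/n^2) ≤ Real.log (DD n k) + (k:ℝ)^2/(2*n) by
    refine ⟨h.1, abs_le.2 ⟨?_, ?_⟩⟩
    · have : 0 ≤ (k:ℝ)/(2*n) := by positivity
      linarith [h.2.2]
    · have : 0 ≤ 2*(k:ℝ)^3/n^2 := by positivity
      linarith [h.2.1]
  induction k with
  | zero => simp [DD]
  | succ k ih =>
    obtain ⟨i1, i2, i3⟩ := ih (by omega)
    have hk' : 2*((k:ℝ)+1) ≤ n := by exact_mod_cast hk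
    have hu : -(1/2) ≤ -((k:ℝ)/n) := by
      rw [neg_le_neg_iff, div_le_iff₀ hn']; linarith
    have hs : DD n (k+1) = DD n k * (1 + -((k:ℝ)/n)) := by
      unfold DD
      rw [Nat.descFactorial_succ, pow_succ]
      push_cast [show k ≤ n by omega]
      field_simp
      ring
    have hp : 0 < 1 + -((k:ℝ)/n) := by linarith
    have hl := log_lo hu
    have hh := log_hi hu
    refine ⟨by rw [hs]; positivity, ?_, ?_⟩
    · rw [hs, Real.log_mul i1.ne' hp.ne']
      push_cast
      have : ((k:ℝ)+1)^2/(2*n) = (k:ℝ)^2/(2*n) + k/n + 1/(2*n) := by field_simp; ring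
      have : ((k:ℝ)+1)/(2*n) = (k:ℝ)/(2*n) + 1/(2*n) := by field_simp
      linarith
    · rw [hs, Real.log_mul i1.ne' hp.ne']
      push_cast
      have : ((k:ℝ)+1)^2/(2*n) = (k:ℝ)^2/(2*n) + k/n + 1/(2*n) := by field_simp; ring
      have : 0 < 1/(2*(n:ℝ)) := by positivity
      have h2 : 2*(-((k:ℝ)/n))^2 + 2*(k:ℝ)^3/n^2 ≤ 2*((k:ℝ)+1)^3/n^2 := by
        have : 2*(-((k:ℝ)/n))^2 + 2*(k:ℝ)^3/n^2 = (2*k^2 + 2*k^3)/n^2 := by field_simp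
        rw [this]
        gcongr
        nlinarith [sq_nonneg (k:ℝ), (Nat.cast_nonneg k : (0:ℝ) ≤ k)]
      linarith


lemma exp_quad (φ : ℝ) : |Real.exp φ - 1 - φ| ≤ φ^2 * Real.exp |φ| := by
  have h1 := Real.add_one_le_exp φ
  have h2 := Real.add_one_le_exp (-φ)
  have hp := Real.exp_pos φ
  have h3 : Real.exp (-φ) * Real.exp φ = 1 := by rw [← Real.exp_add]; simp
  have h4 : Real.exp φ - 1 ≤ φ * Real.exp φ := by nlinarith
  rw [abs_of_nonneg (by linarith)]
  rcases le_total 0 φ with h | h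
  · rw [abs_of_nonneg h]
    nlinarith
  · rw [abs_of_nonpos h]
    have h5 : 1 ≤ Real.exp (-φ) := by linarith
    nlinarith [sq_nonneg φ]

set_option maxHeartbeats 1000000 in
lemma central (γ α : ℝ) (hγ : -1 < γ) (hα : 0 < α) : ∃ C : ℝ, 0 ≤ C ∧ ∀ᶠ n : ℕ in atTop,
    ∀ k : ℕ, Real.sqrt (α*n) / 2 ≤ k → (k:ℝ) ≤ 2 * Real.sqrt (α*n) →
    |Real.exp (α/2) * Real.sqrt (α*n) ^ (γ+1/2) * (DD n k * RR γ k) - 1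
      + (γ+1/2+α) * ((k - Real.sqrt (α*n))/Real.sqrt (α*n))|
      ≤ C * (((k - Real.sqrt (α*n))/Real.sqrt (α*n))^2 + 1/Real.sqrt (α*n)) := by
  obtain ⟨C1, N1, hN1, hC1, hR⟩ := RR_log γ hγ
  set q := γ+1/2 with hq
  set K := 2*|q| + α + (2*C1 + α + 16*α^2) with hK
  have hK0 : 0 ≤ K := by positivity
  refine ⟨K + (2*(q+α)^2 + 4*K^2) * Real.exp (|q+α| + 2*K), by positivity, ?_⟩
  have hty : Tendsto (fun n : ℕ => Real.sqrt (α*n)) atTop atTop :=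
    Real.tendsto_sqrt_atTop.comp (tendsto_natCast_atTop_atTop.const_mul_atTop hα)
  filter_upwards [hty.eventually_ge_atTop (1 + 2*N1 + 4*α), eventually_gt_atTop 0] with n hy hn k hk1 hk2
  have hn' : (0:ℝ) < n := by exact_mod_cast hn
  have hysq : Real.sqrt (α*n)^2 = α*n := Real.sq_sqrt (by positivity)
  set y := Real.sqrt (α*n) with hydef
  have hy1 : 1 ≤ y := by linarith
  have hy0 : 0 < y := by linarith
  have hk0 : (0:ℝ) < k := by linarith
  have h2k : 2*k ≤ n := by
    have : 2*(k:ℝ) ≤ n := by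
      have : 4*α*y ≤ α*n := by rw [← hysq]; nlinarith
      have : 4*y ≤ n := by nlinarith
      linarith
    exact_mod_cast this
  obtain ⟨hD0, hD⟩ := DD_log n k h2k hn
  have hR1 := hR k (by linarith)
  set u := ((k:ℝ) - y)/y with hu
  have hku : (k:ℝ) = y * (1+u) := by rw [hu]; field_simp; ring
  have hul : -(1/2) ≤ u := by rw [hu, le_div_iff₀ hy0]; linarith
  have huu : u ≤ 1 := by rw [hu, div_le_iff₀ hy0]; linarith
  have hny : (n:ℝ) = y^2/α := by rw [hysq]; field_simp
  have hRp := RR_pos γ hγ k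
  have e1 : C1/k ≤ 2*C1/y := by
    rw [div_le_div_iff₀ hk0 hy0]; nlinarith
  have e2 : (k:ℝ)/(2*n) ≤ α/y := by
    rw [hny, div_le_div_iff₀ (by positivity) hy0]
    field_simp
    nlinarith
  have e3 : 2*(k:ℝ)^3/n^2 ≤ 16*α^2/y := by
    rw [hny, div_le_div_iff₀ (by positivity) hy0]
    have h3 : (k:ℝ)^3 ≤ (2*y)^3 := by gcongr
    have : 16*α^2*(y^2/α)^2 = 2*(2*y)^3 * y := by field_simp; ring
    rw [this]
    gcongr
  have e4 : (k:ℝ)^2/(2*n) = α/2 + α*u + α*u^2/2 := by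
    rw [hny, hku]; field_simp; ring
  have e5 : Real.log k = Real.log y + Real.log (1+u) := by
    rw [hku, Real.log_mul hy0.ne' (by linarith)]
  set φ := α/2 + q*Real.log y + Real.log (DD n k) + Real.log (RR γ k) with hφ
  have hexp : Real.exp (α/2) * y^q * (DD n k * RR γ k) = Real.exp φ := by
    rw [hφ, Real.exp_add, Real.exp_add, Real.exp_add, Real.exp_log hD0, Real.exp_log hRp,
      Real.rpow_def_of_pos hy0, mul_comm (Real.log y)]
    ring
  have l1 := log_lo hul
  have l2 := log_hi hul
  have l3 : |q * (Real.log (1+u) - u)| ≤ |q| * (2*u^2) := by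
    rw [abs_mul]
    gcongr
    have := sq_nonneg u
    rw [abs_le]; constructor <;> linarith
  set δ := u^2 + 1/y with hδ
  have hyi : 0 < 1/y := by positivity
  have hyi1 : 1/y ≤ 1 := by rw [div_le_one hy0]; exact hy1
  have hδ0 : 0 ≤ δ := by positivity
  have hδ2 : δ ≤ 2 := by nlinarith
  have m1 : |φ + (q+α)*u| ≤ K*δ := by
    have : φ + (q+α)*u = -(q * (Real.log (1+u) - u)) - α*u^2/2
       + (Real.log (RR γ k) + q*Real.log k) + (Real.log (DD n k) + (k:ℝ)^2/(2*n)) := by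
      rw [hφ, e4, e5]; ring
    rw [this]
    have hb : |q| *(2*u^2) + α*u^2/2 + 2*C1/y + (α/y + 16*α^2/y) ≤ K*δ := by
      have : K*δ = (|q| *(2*u^2) + α*u^2/2 + 2*C1/y + (α/y + 16*α^2/y)) + (α*u^2/2 + (2*C1 + α + 16*α^2) * u^2 + (2*|q| + α)/y) := by
        rw [hK, hδ]; ring
      rw [this]
      have : 0 ≤ (α*u^2/2 + (2*C1 + α + 16*α^2) * u^2 + (2*|q| + α)/y) := by positivity
      linarith
    have h0 : 0 ≤ α*u^2/2 := by positivity
    rw [abs_le] at *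
    constructor <;> linarith
  have hau : |u| ≤ 1 := abs_le.2 ⟨by linarith, huu⟩
  have m2 : |φ| ≤ |q+α| + 2*K := by
    have h1 : |(q+α)*u| ≤ |q+α| := by
      rw [abs_mul]; exact mul_le_of_le_one_right (abs_nonneg _) hau
    have h2 : K*δ ≤ 2*K := by rw [mul_comm]; exact mul_le_mul_of_nonneg_right hδ2 hK0
    rw [abs_le] at *
    constructor <;> linarith
  have m3 : φ^2 ≤ (2*(q+α)^2 + 4*K^2)*δ := by
    have h1 : (φ + (q+α)*u)^2 ≤ (K*δ)^2 := by
      rw [← sq_abs]; gcongr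
    have h2 : φ^2 ≤ 2*(φ + (q+α)*u)^2 + 2*((q+α)*u)^2 := by
      have e : 2*(φ + (q+α)*u)^2 + 2*((q+α)*u)^2 - φ^2 = (φ + 2*((q+α)*u))^2 := by ring
      exact sub_nonneg.1 (e ▸ sq_nonneg _)
    have h3 : (K*δ)^2 ≤ 2*K^2*δ := by
      have : (K*δ)^2 = K^2*δ*δ := by ring
      rw [this]
      have h0 : 0 ≤ K^2*δ := by positivity
      calc _ ≤ K^2*δ*2 := mul_le_mul_of_nonneg_left hδ2 h0
        _ = _ := by ring
    have h4 : ((q+α)*u)^2 ≤ (q+α)^2*δ := by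
      rw [mul_pow]; gcongr; linarith
    calc φ^2 ≤ 2*(2*K^2*δ) + 2*((q+α)^2*δ) := by linarith
      _ = _ := by ring
  have m4 := exp_quad φ
  have m5 : φ^2 * Real.exp |φ| ≤ (2*(q+α)^2 + 4*K^2)*δ * Real.exp (|q+α| + 2*K) := by
    gcongr
  rw [hexp]
  calc |Real.exp φ - 1 + (q+α)*u| = |(Real.exp φ - 1 - φ) + (φ + (q+α)*u)| := by congr 1; ring
    _ ≤ |Real.exp φ - 1 - φ| + |φ + (q+α)*u| := abs_add_le _ _
    _ ≤ (2*(q+α)^2 + 4*K^2)*δ * Real.exp (|q+α| + 2*K) + K*δ := by linarith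
    _ = _ := by ring

lemma hasSum_congr_aux {f g : ℕ → ℝ} {a : ℝ} (h : HasSum f a) (hfg : ∀ k, g k = f k) :
    HasSum g a := by
  rwa [show g = f from funext hfg]

lemma hasSum_val_aux {f : ℕ → ℝ} {a b : ℝ} (h : HasSum f a) (hab : b = a) : HasSum f b := by
  rwa [hab]

noncomputable def WW (z : ℝ) (k : ℕ) : ℝ := z^(2*k) / ((2*k).factorial : ℝ)

lemma WW_nonneg (z : ℝ) (k : ℕ) : 0 ≤ WW z k := by
  unfold WW
  have : 0 ≤ z^(2*k) := by rw [pow_mul]; positivity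
  positivity

lemma hW (z : ℝ) : HasSum (WW z) (Real.cosh z) := Real.hasSum_cosh z

lemma hW1 (z : ℝ) : HasSum (fun k => WW z k * (2*k)) (z * Real.sinh z) := by
  have h := (Real.hasSum_sinh z).mul_left z
  rw [← add_zero (z * Real.sinh z), show (0:ℝ) = ∑ i ∈ Finset.range 1, WW z i * (2*i) by simp,
    ← hasSum_nat_add_iff 1]
  refine hasSum_congr_aux h (fun k => ?_)
  unfold WW
  rw [show 2*(k+1) = (2*k+1)+1 by ring, Nat.factorial_succ, pow_succ]
  have : ((2*k+1).factorial : ℝ) ≠ 0 := by positivity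
  push_cast
  field_simp
  ring

lemma hW2 (z : ℝ) : HasSum (fun k => WW z k * ((2*k)*(2*k-1))) (z^2 * Real.cosh z) := by
  have h := (Real.hasSum_cosh z).mul_left (z^2)
  rw [← add_zero (z^2 * Real.cosh z),
    show (0:ℝ) = ∑ i ∈ Finset.range 1, WW z i * ((2*i)*(2*i-1)) by simp,
    ← hasSum_nat_add_iff 1]
  refine hasSum_congr_aux h (fun k => ?_)
  unfold WW
  rw [show 2*(k+1) = (2*k+1)+1 by ring, Nat.factorial_succ, Nat.factorial_succ, pow_succ, pow_succ]
  have : ((2*k).factorial : ℝ) ≠ 0 := by positivity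
  push_cast
  field_simp
  ring

lemma hU (y : ℝ) (hy : 0 < y) :
    HasSum (fun k : ℕ => WW (2*y) k * ((k-y)/y)) (-Real.exp (-(2*y))) := by
  have h := ((hW1 (2*y)).sub ((hW (2*y)).mul_right (2*y))).mul_left (1/(2*y))
  refine hasSum_congr_aux (a := _) (hasSum_val_aux h ?_) (fun k => ?_)
  swap
  · field_simp
  · rw [← Real.cosh_sub_sinh]; field_simp; ring

lemma hU2 (y : ℝ) (hy : 0 < y) :
    HasSum (fun k : ℕ => WW (2*y) k * ((k-y)/y)^2)
      (2*Real.exp (-(2*y)) + Real.sinh (2*y)/(2*y)) := by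
  have h := (((hW2 (2*y)).add ((hW1 (2*y)).mul_right (1-4*y))).add
    ((hW (2*y)).mul_right ((2*y)^2))).mul_left (1/(2*y)^2)
  refine hasSum_congr_aux (a := _) (hasSum_val_aux h ?_) (fun k => ?_)
  swap
  · field_simp; ring
  · rw [← Real.cosh_sub_sinh]; field_simp; ring


noncomputable def MM (γ α : ℝ) (n : ℕ) : ℝ :=
  ∑ k ∈ Finset.range (n+1), (n.choose k : ℝ) * α^k / Real.Gamma (k+γ+1)

lemma MM_pos (γ α : ℝ) (hγ : -1 < γ) (hα : 0 < α) (n : ℕ) : 0 < MM γ α n := by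
  unfold MM
  apply Finset.sum_pos _ ⟨0, by simp⟩
  intro k hk
  have : (0:ℝ) ≤ k := by positivity
  have h1 := Real.Gamma_pos_of_pos (show 0 < (k:ℝ)+γ+1 by linarith)
  have h2 : 0 < n.choose k := Nat.choose_pos (by simp at hk; omega)
  positivity

lemma WW_Gamma (y : ℝ) (k : ℕ) :
    WW (2*y) k * Real.Gamma (k+1/2) = Real.sqrt Real.pi * (y^2)^k / (k.factorial : ℝ) := by
  induction k with
  | zero => simp [WW]; rw [← Real.Gamma_one_half_eq]; norm_num
  | succ k ih =>
    have h1 : WW (2*y) (k+1) = WW (2*y) k * ((2*y)^2/((2*k+2)*(2*k+1))) := by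
      unfold WW
      rw [show 2*(k+1) = (2*k+1)+1 by ring, Nat.factorial_succ, Nat.factorial_succ]
      have : ((2*k).factorial : ℝ) ≠ 0 := by positivity
      push_cast
      field_simp
      ring
    have h2 : Real.Gamma (((k+1:ℕ):ℝ)+1/2) = (k+1/2) * Real.Gamma (k+1/2) := by
      push_cast
      rw [show (k:ℝ)+1+1/2 = (k+1/2)+1 by ring, Real.Gamma_add_one (by positivity)]
    calc _ = (WW (2*y) k * Real.Gamma (k+1/2)) * (((2*y)^2/((2*k+2)*(2*k+1))) * (k+1/2)) := by
            rw [h1, h2]; ring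
      _ = _ := by
        rw [ih, Nat.factorial_succ]
        have : (k.factorial : ℝ) ≠ 0 := by positivity
        push_cast
        field_simp
        ring

lemma term_eq (γ α : ℝ) (hα : 0 < α) (n k : ℕ) (hn : 0 < n) :
    Real.sqrt Real.pi * ((n.choose k : ℝ) * α^k / Real.Gamma (k+γ+1)) =
      WW (2*Real.sqrt (α*n)) k * (DD n k * RR γ k) := by
  have h := WW_Gamma (Real.sqrt (α*n)) k
  rw [Real.sq_sqrt (by positivity)] at h
  have hn' : (n:ℝ) ≠ 0 := by positivity
  unfold RR DD
  calc _ = (Real.sqrt Real.pi * (α*n)^k / (k.factorial : ℝ)) *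
        ((n.descFactorial k : ℝ) / (n:ℝ)^k / Real.Gamma (k+γ+1)) := by
          rw [Nat.descFactorial_eq_factorial_mul_choose]
          have : (k.factorial : ℝ) ≠ 0 := by positivity
          push_cast
          rw [mul_pow]
          field_simp
    _ = _ := by rw [← h]; ring

lemma hM (γ α : ℝ) (hα : 0 < α) (n : ℕ) (hn : 0 < n) :
    HasSum (fun k => WW (2*Real.sqrt (α*n)) k * (DD n k * RR γ k))
      (Real.sqrt Real.pi * MM γ α n) := by
  have h := hasSum_sum_of_ne_finset_zero
    (f := fun k => WW (2*Real.sqrt (α*n)) k * (DD n k * RR γ k)) (s := Finset.range (n+1))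
    (L := SummationFilter.unconditional ℕ) (by
      intro k hk
      have : n < k := by simp at hk; omega
      simp [DD, Nat.descFactorial_eq_zero_iff_lt.2 this])
  refine hasSum_val_aux h ?_
  unfold MM
  rw [Finset.mul_sum]
  exact Finset.sum_congr rfl (fun k _ => term_eq γ α hα n k hn)

lemma WW_scale (c z : ℝ) (k : ℕ) : WW (c*z) k = (c^2)^k * WW z k := by
  unfold WW; rw [mul_pow, pow_mul c, mul_div_assoc]

lemma tail_pt (y : ℝ) (k : ℕ) (h : (k:ℝ) < y/2 ∨ 2*y < k) :
    WW (2*y) k * (k+1) ≤ 5*((2:ℝ)^y * WW (0.55*(2*y)) k + (2:ℝ)^(-(4*y)) * WW (2.2*(2*y)) k) := by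
  rw [WW_scale 0.55, WW_scale 2.2]
  have hb := one_add_mul_le_pow (show (-2:ℝ) ≤ 0.21 by norm_num) k
  have hk1 : (k:ℝ)+1 ≤ 5*1.21^k := by
    rw [show (1:ℝ)+0.21 = 1.21 by norm_num] at hb
    have : (0:ℝ) ≤ k := by positivity
    linarith
  have e1 : ((0.55:ℝ)^2)^k = 1.21^k * (2:ℝ)^(-(2*k:ℝ)) := by
    rw [Real.rpow_neg (by norm_num), show (2*k:ℝ) = ((2*k:ℕ):ℝ) by push_cast; ring,
      Real.rpow_natCast, pow_mul, ← inv_pow, ← mul_pow]; norm_num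
  have e2 : ((2.2:ℝ)^2)^k = 1.21^k * (2:ℝ)^(2*k:ℝ) := by
    rw [show (2*k:ℝ) = ((2*k:ℕ):ℝ) by push_cast; ring,
      Real.rpow_natCast, pow_mul, ← mul_pow]; norm_num
  have hw := WW_nonneg (2*y) k
  have key : (1:ℝ) ≤ (2:ℝ)^y * (2:ℝ)^(-(2*k:ℝ)) + (2:ℝ)^(-(4*y)) * (2:ℝ)^(2*k:ℝ) := by
    rw [← Real.rpow_add two_pos, ← Real.rpow_add two_pos]
    rcases h with h | h
    · have := Real.one_le_rpow (show (1:ℝ) ≤ 2 by norm_num) (show 0 ≤ y + -(2*k:ℝ) by linarith)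
      have h2 : (0:ℝ) < (2:ℝ)^(-(4*y)+2*k) := by positivity
      linarith
    · have := Real.one_le_rpow (show (1:ℝ) ≤ 2 by norm_num) (show 0 ≤ -(4*y) + (2*k:ℝ) by linarith)
      have h2 : (0:ℝ) < (2:ℝ)^(y+ -(2*k:ℝ)) := by positivity
      linarith
  rw [e1, e2]
  calc WW (2*y) k * (k+1) ≤ WW (2*y) k * (5*1.21^k) := by gcongr
    _ = WW (2*y) k * (5*1.21^k) * 1 := by ring
    _ ≤ WW (2*y) k * (5*1.21^k) * ((2:ℝ)^y * (2:ℝ)^(-(2*k:ℝ)) + (2:ℝ)^(-(4*y)) * (2:ℝ)^(2*k:ℝ)) := by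
      gcongr
    _ = _ := by ring

lemma cosh_le (x : ℝ) (hx : 0 ≤ x) : Real.cosh x ≤ Real.exp x := by
  rw [← Real.cosh_add_sinh]
  have := Real.sinh_nonneg_iff.2 hx
  linarith

lemma tail_sum (y : ℝ) (hy : 0 ≤ y) :
    5*((2:ℝ)^y * Real.cosh (0.55*(2*y)) + (2:ℝ)^(-(4*y)) * Real.cosh (2.2*(2*y)))
      ≤ 10 * Real.exp (1.8*y) := by
  have h1 := cosh_le (0.55*(2*y)) (by positivity)
  have h2 := cosh_le (2.2*(2*y)) (by positivity)
  have l1 := Real.log_two_lt_d9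
  have l2 := Real.log_two_gt_d9
  have a1 : (2:ℝ)^y * Real.cosh (0.55*(2*y)) ≤ Real.exp (1.8*y) := by
    calc _ ≤ (2:ℝ)^y * Real.exp (0.55*(2*y)) := by gcongr
      _ = Real.exp (Real.log 2 * y + 0.55*(2*y)) := by
        rw [Real.rpow_def_of_pos two_pos, Real.exp_add]
      _ ≤ _ := by apply Real.exp_le_exp.2; nlinarith
  have a2 : (2:ℝ)^(-(4*y)) * Real.cosh (2.2*(2*y)) ≤ Real.exp (1.8*y) := by
    calc _ ≤ (2:ℝ)^(-(4*y)) * Real.exp (2.2*(2*y)) := by gcongr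
      _ = Real.exp (Real.log 2 * (-(4*y)) + 2.2*(2*y)) := by
        rw [Real.rpow_def_of_pos two_pos, Real.exp_add]
      _ ≤ _ := by apply Real.exp_le_exp.2; nlinarith
  linarith

lemma tendsto_y (α : ℝ) (hα : 0 < α) :
    Tendsto (fun n : ℕ => Real.sqrt (α*n)) atTop atTop :=
  Real.tendsto_sqrt_atTop.comp (tendsto_natCast_atTop_atTop.const_mul_atTop hα)

set_option maxHeartbeats 1000000 in
lemma main_sum (γ α : ℝ) (hγ : -1 < γ) (hα : 0 < α) : ∃ C C' K : ℝ, 0 ≤ C ∧ 0 ≤ C' ∧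
    0 ≤ K ∧ ∀ᶠ n : ℕ in atTop,
    |Real.exp (α/2) * Real.sqrt (α*n) ^ (γ+1/2) * (Real.sqrt Real.pi * MM γ α n)
      - Real.cosh (2*Real.sqrt (α*n))| ≤ K * Real.exp (-(2*Real.sqrt (α*n))) +
      (C * ((2*Real.exp (-(2*Real.sqrt (α*n))) + Real.sinh (2*Real.sqrt (α*n))/(2*Real.sqrt (α*n)))
        + Real.cosh (2*Real.sqrt (α*n)) * (1/Real.sqrt (α*n)))
        + C' * (Real.sqrt (α*n) ^ (γ+1/2) * Real.exp (1.8*Real.sqrt (α*n)))) := by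
  obtain ⟨C0, hC0, hcen⟩ := central γ α hγ hα
  obtain ⟨CR, hCR, hRb⟩ := RR_bound γ hγ
  set q := γ+1/2 with hq
  set C := C0 + (4 + 2*|q+α|) with hC
  refine ⟨C, Real.exp (α/2) * CR * 10, |q+α|, by positivity, by positivity, by positivity, ?_⟩
  filter_upwards [hcen, (tendsto_y α hα).eventually_gt_atTop 0, eventually_gt_atTop 0]
    with n hcen hy hn
  have hMM := hM γ α hα n hn
  set y := Real.sqrt (α*n) with hydef
  have hyq : 0 < y^q := Real.rpow_pos_of_pos hy q
  set κ := Real.exp (α/2) * y^q with hκ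
  have hκ0 : 0 < κ := by positivity
  have hE := ((hMM.mul_left κ).sub (hW (2*y))).add ((hU y hy).mul_left (q+α))
  have hT := ((((hW (0.55*(2*y))).mul_left ((2:ℝ)^y)).add
    ((hW (2.2*(2*y))).mul_left ((2:ℝ)^(-(4*y))))).mul_left 5).mul_left (κ*CR)
  have hB := (((hU2 y hy).add ((hW (2*y)).mul_right (1/y))).mul_left C).add hT
  have hle := hE.norm_le_of_bounded hB (fun k => by
    have hw := WW_nonneg (2*y) k
    have hwa := WW_nonneg (0.55*(2*y)) k
    have hwb := WW_nonneg (2.2*(2*y)) k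
    set u := ((k:ℝ) - y)/y with hu
    have e : κ * (WW (2*y) k * (DD n k * RR γ k)) - WW (2*y) k + (q+α) * (WW (2*y) k * u)
      = WW (2*y) k * (κ * (DD n k * RR γ k) - 1 + (q+α)*u) := by ring
    rw [e, Real.norm_eq_abs, abs_mul, abs_of_nonneg hw]
    by_cases hk : y/2 ≤ k ∧ (k:ℝ) ≤ 2*y
    · have h1 := hcen k hk.1 hk.2
      have h2 : C0 * (u^2 + 1/y) ≤ C * (u^2 + 1/y) := by
        have : 0 ≤ u^2 + 1/y := by positivity
        apply mul_le_mul_of_nonneg_right _ this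
        have : 0 ≤ 4 + 2*|q+α| := by positivity
        linarith
      have h3 : 0 ≤ κ * CR * (5 * ((2:ℝ)^y * WW (0.55*(2*y)) k + (2:ℝ)^(-(4*y)) * WW (2.2*(2*y)) k)) := by
        positivity
      calc _ ≤ WW (2*y) k * (C * (u^2 + 1/y)) := mul_le_mul_of_nonneg_left (h1.trans h2) hw
        _ = C * (WW (2*y) k * u^2 + WW (2*y) k * (1/y)) := by ring
        _ ≤ _ := by linarith
    · have hk' : (k:ℝ) < y/2 ∨ 2*y < k := by
        by_contra hh; push Not at hh; exact hk hh
      have hu2 : 1/2 ≤ |u| := by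
        rw [hu, abs_div, abs_of_pos hy, le_div_iff₀ hy]
        rcases hk' with h | h
        · rw [abs_of_neg (by linarith)]; linarith
        · rw [abs_of_pos (by linarith)]; linarith
      have hu3 : |u| ≤ 2*u^2 := by rw [← sq_abs]; nlinarith
      have hDR : κ * (DD n k * RR γ k) ≤ κ * (CR * (k+1)) := by
        apply mul_le_mul_of_nonneg_left _ hκ0.le
        calc _ ≤ 1 * RR γ k := mul_le_mul_of_nonneg_right (DD_le_one n k) (RR_pos γ hγ k).le
          _ ≤ _ := by rw [one_mul]; exact hRb k
      have hDR0 : 0 ≤ κ * (DD n k * RR γ k) :=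
        mul_nonneg hκ0.le (mul_nonneg (DD_nonneg n k) (RR_pos γ hγ k).le)
      have h1 : |κ * (DD n k * RR γ k) - 1 + (q+α)*u| ≤ κ * (CR * (k+1)) + C * u^2 := by
        have a1 : |(q+α)*u| ≤ |q+α| * (2*u^2) := by
          rw [abs_mul]; exact mul_le_mul_of_nonneg_left hu3 (abs_nonneg _)
        have a2 : 1 ≤ 4*u^2 := by linarith
        have a3 : C*u^2 = C0*u^2 + 4*u^2 + |q+α| * (2*u^2) := by rw [hC]; ring
        have a4 : 0 ≤ C0*u^2 := by positivity
        rw [a3]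
        rw [abs_le] at a1 ⊢
        constructor <;> linarith
      have h2 := mul_le_mul_of_nonneg_left (tail_pt y k hk') (mul_nonneg hκ0.le hCR.le)
      have h3 : 0 ≤ C * (WW (2*y) k * (1/y)) := by positivity
      calc _ ≤ WW (2*y) k * (κ * (CR * (k+1)) + C * u^2) := mul_le_mul_of_nonneg_left h1 hw
        _ = C * (WW (2*y) k * u^2) + κ * CR * (WW (2*y) k * (k+1)) := by ring
        _ ≤ C * (WW (2*y) k * u^2 + WW (2*y) k * (1/y)) + _ := by rw [mul_add]; linarith)
  rw [Real.norm_eq_abs] at hle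
  have hts := mul_le_mul_of_nonneg_left (tail_sum y hy.le) (mul_nonneg hκ0.le hCR.le)
  have hab : |(q+α) * -Real.exp (-(2*y))| = |q+α| * Real.exp (-(2*y)) := by
    rw [abs_mul, abs_neg, abs_of_pos (Real.exp_pos _)]
  have h5 : κ*CR*(10*Real.exp (1.8*y)) = Real.exp (α/2) * CR * 10 * (y^q * Real.exp (1.8*y)) := by
    rw [hκ]; ring
  rw [h5] at hts
  have h6 := abs_sub_abs_le_abs_sub (κ * (Real.sqrt Real.pi * MM γ α n) - Real.cosh (2*y)) (-((q+α) * -Real.exp (-(2*y))))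
  rw [sub_neg_eq_add, abs_neg, hab] at h6
  linarith


set_option maxHeartbeats 1000000 in
lemma main_rel (γ α : ℝ) (hγ : -1 < γ) (hα : 0 < α) : ∃ C : ℝ, 0 ≤ C ∧ ∀ᶠ n : ℕ in atTop,
    |Real.exp (α/2) * Real.sqrt (α*n) ^ (γ+1/2) * (Real.sqrt Real.pi * MM γ α n)
      * (2 * Real.exp (-(2*Real.sqrt (α*n)))) - 1| ≤ C / Real.sqrt (α*n) := by
  obtain ⟨C, C', K, hC, hC', hK, h⟩ := main_sum γ α hγ hα
  refine ⟨1 + 2*(K + C*2 + C + C + C'), by positivity, ?_⟩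
  have hdec : ∀ᶠ y : ℝ in atTop, y^(γ+1/2+1) * Real.exp (-0.2*y) < 1 :=
    (tendsto_rpow_mul_exp_neg_mul_atTop_nhds_zero (γ+1/2+1) 0.2 (by norm_num)).eventually_lt_const
      one_pos
  filter_upwards [h, (tendsto_y α hα).eventually hdec, (tendsto_y α hα).eventually_ge_atTop 1]
    with n h hd hy1
  set y := Real.sqrt (α*n) with hydef
  set Q := Real.exp (α/2) * y ^ (γ+1/2) * (Real.sqrt Real.pi * MM γ α n) with hQ
  have hy : 0 < y := by linarith
  set E := Real.exp (2*y) with hE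
  have hE0 : 0 < E := Real.exp_pos _
  have hEi : Real.exp (-(2*y)) = E⁻¹ := by rw [hE, Real.exp_neg]
  have hEy : y ≤ E := by have := Real.add_one_le_exp (2*y); linarith
  have hE1 : 1 ≤ E := by linarith
  have b1 : E⁻¹ ≤ 1/y := by
    rw [inv_eq_one_div]; exact one_div_le_one_div_of_le hy hEy
  have b1' : E⁻¹ ≤ E * (1/y) := b1.trans (le_mul_of_one_le_left (by positivity) hE1)
  have b2 : Real.cosh (2*y) ≤ E := cosh_le _ (by positivity)
  have b3 : Real.sinh (2*y)/(2*y) ≤ E*(1/y) := by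
    have : Real.sinh (2*y) ≤ E := by
      rw [hE, ← Real.cosh_add_sinh]; linarith [Real.cosh_pos (2*y)]
    rw [div_le_iff₀ (by positivity)]
    field_simp; linarith
  have b4 : Real.cosh (2*y) * (1/y) ≤ E*(1/y) := by gcongr
  have b5 : y^(γ+1/2) * Real.exp (1.8*y) ≤ E*(1/y) := by
    rw [Real.rpow_add_one hy.ne'] at hd
    have : Real.exp (1.8*y) = E * Real.exp (-0.2*y) := by
      rw [hE, ← Real.exp_add]; congr 1; ring
    rw [this, ← sub_nonneg]
    have e : E*(1/y) - y^(γ+1/2) * (E * Real.exp (-0.2*y)) =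
      E/y * (1 - y^(γ+1/2)*y*Real.exp (-0.2*y)) := by field_simp
    rw [e]
    apply mul_nonneg (by positivity); linarith
  rw [hEi] at h ⊢
  have hb : |Q - Real.cosh (2*y)| ≤ (K + C*2 + C + C + C')*(E*(1/y)) := by
    refine h.trans ?_
    have := mul_le_mul_of_nonneg_left b1' hK
    have := mul_le_mul_of_nonneg_left (show (2*E⁻¹ + Real.sinh (2*y)/(2*y)) + Real.cosh (2*y) * (1/y)
      ≤ 4*(E*(1/y)) by linarith) hC
    have := mul_le_mul_of_nonneg_left b5 hC'
    linarith
  have hcosh : Real.cosh (2*y) * (2*E⁻¹) - 1 = E⁻¹*E⁻¹ := by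
    rw [Real.cosh_eq, hEi]; field_simp; ring
  have : Q * (2*E⁻¹) - 1 = (Q - Real.cosh (2*y)) * (2*E⁻¹) + E⁻¹*E⁻¹ := by
    rw [← hcosh]; ring
  rw [this]
  have hEi0 : 0 < E⁻¹ := by positivity
  calc _ ≤ |(Q - Real.cosh (2*y)) * (2*E⁻¹)| + |E⁻¹*E⁻¹| := abs_add_le _ _
    _ = |Q - Real.cosh (2*y)| * (2*E⁻¹) + E⁻¹*E⁻¹ := by
      rw [abs_mul, abs_of_pos (show 0 < 2*E⁻¹ by positivity), abs_of_pos (show 0 < E⁻¹*E⁻¹ by positivity)]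
    _ ≤ ((K + C*2 + C + C + C')*(E*(1/y))) * (2*E⁻¹) + 1/y := by
      gcongr
      calc E⁻¹*E⁻¹ ≤ E⁻¹*1 := by gcongr; exact inv_le_one_of_one_le₀ hE1
        _ ≤ 1/y := by rw [mul_one]; exact b1
    _ = _ := by field_simp; ring

/-- the comparison function -/
noncomputable def gg (n : ℕ) : ℝ := (Real.sqrt n)⁻¹

lemma gg_nonneg (n : ℕ) : 0 ≤ gg n := by unfold gg; positivity

lemma gg_tendsto : Tendsto gg atTop (nhds 0) :=
  tendsto_inv_atTop_zero.comp (Real.tendsto_sqrt_atTop.comp tendsto_natCast_atTop_atTop)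

lemma log_isBigO {f : ℕ → ℝ} (h : (fun n => f n - 1) =O[atTop] gg) :
    (fun n => Real.log (f n)) =O[atTop] gg := by
  have ht : Tendsto (fun n => f n - 1) atTop (nhds 0) := h.trans_tendsto gg_tendsto
  have hev : ∀ᶠ n in atTop, |f n - 1| < 1/2 := by
    have := ht.abs
    rw [abs_zero] at this
    exact this.eventually_lt_const (by norm_num)
  refine IsBigO.trans (IsBigO.of_bound 2 ?_) h
  filter_upwards [hev] with n hn
  have := abs_log_le hn.le
  rw [Real.norm_eq_abs, Real.norm_eq_abs]
  rwa [show 1 + (f n - 1) = f n by ring] at this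

lemma exp_isBigO {f : ℕ → ℝ} (h : f =O[atTop] gg) :
    (fun n => Real.exp (f n) - 1) =O[atTop] gg := by
  have ht : Tendsto f atTop (nhds 0) := h.trans_tendsto gg_tendsto
  have hev : ∀ᶠ n in atTop, |f n| < 1 := by
    have := ht.abs
    rw [abs_zero] at this
    exact this.eventually_lt_const (by norm_num)
  refine IsBigO.trans (IsBigO.of_bound 2 ?_) h
  filter_upwards [hev] with n hn
  exact Real.abs_exp_sub_one_le hn.le

lemma MM_log (γ α : ℝ) (hγ : -1 < γ) (hα : 0 < α) :
    (fun n : ℕ => Real.log (MM γ α n) - (2*Real.sqrt (α*n) - Real.log 2 - Real.log Real.pi / 2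
      - α/2 - (γ+1/2) * Real.log (α*n) / 2)) =O[atTop] gg := by
  obtain ⟨C, hC, h⟩ := main_rel γ α hγ hα
  have h1 : (fun n : ℕ => Real.exp (α/2) * Real.sqrt (α*n) ^ (γ+1/2) * (Real.sqrt Real.pi * MM γ α n)
      * (2 * Real.exp (-(2*Real.sqrt (α*n)))) - 1) =O[atTop] gg := by
    refine IsBigO.of_bound (C / Real.sqrt α) ?_
    filter_upwards [h] with n hn
    rw [Real.norm_eq_abs, Real.norm_eq_abs, abs_of_nonneg (gg_nonneg n)]
    refine hn.trans (le_of_eq ?_)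
    unfold gg
    rw [Real.sqrt_mul hα.le]
    ring
  refine (log_isBigO h1).congr' ?_ EventuallyEq.rfl
  filter_upwards [(tendsto_y α hα).eventually_gt_atTop 0, eventually_gt_atTop 0] with n hy hn
  have hM := MM_pos γ α hγ hα n
  have hpi : 0 < Real.sqrt Real.pi := Real.sqrt_pos.2 Real.pi_pos
  have hyq := Real.rpow_pos_of_pos hy (γ+1/2)
  have he := Real.exp_pos (α/2)
  have he2 := Real.exp_pos (-(2*Real.sqrt (α*n)))
  rw [Real.log_mul (by positivity) (by positivity), Real.log_mul (by positivity) (by positivity),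
    Real.log_mul (by positivity) (by positivity), Real.log_mul (by positivity) (by positivity),
    Real.log_mul (by positivity) (by positivity), Real.log_exp, Real.log_exp,
    Real.log_rpow hy, Real.log_sqrt (by positivity), Real.log_sqrt (by positivity)]
  ring

noncomputable def pp (γ α : ℝ) (n : ℕ) : ℝ :=
  1 / Real.sqrt (Real.Gamma (n+γ+1) / (n.factorial : ℝ) / Real.Gamma (γ+1)) *
    (Real.Gamma (n+γ+1) / (n.factorial : ℝ) * MM γ α n)

lemma pp_pos (γ α : ℝ) (hγ : -1 < γ) (hα : 0 < α) (n : ℕ) : 0 < pp γ α n := by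
  have : (0:ℝ) ≤ n := by positivity
  have h1 := Real.Gamma_pos_of_pos (show 0 < (n:ℝ)+γ+1 by linarith)
  have h2 := Real.Gamma_pos_of_pos (show 0 < γ+1 by linarith)
  have hM := MM_pos γ α hγ hα n
  unfold pp; positivity

lemma pp_log (γ α : ℝ) (hγ : -1 < γ) (hα : 0 < α) :
    (fun n : ℕ => Real.log (pp γ α n) - (2*Real.sqrt α * Real.sqrt n - Real.log n / 4 +
      (Real.log (Real.Gamma (γ+1))/2 - Real.log 2 - Real.log Real.pi / 2
      - α/2 - (γ+1/2) * Real.log α / 2))) =O[atTop] gg := by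
  obtain ⟨C, N, hN, hC, h⟩ := GR_all (γ+1)
  have h1 : (fun n : ℕ => Real.log (Real.Gamma (n+(γ+1))) - Real.log (Real.Gamma n) - (γ+1) * Real.log n)
      =O[atTop] gg := by
    refine IsBigO.of_bound C ?_
    filter_upwards [tendsto_natCast_atTop_atTop.eventually_ge_atTop N,
      tendsto_natCast_atTop_atTop.eventually_ge_atTop (1:ℝ)] with n hn hn1
    rw [Real.norm_eq_abs, Real.norm_eq_abs, abs_of_nonneg (gg_nonneg n)]
    refine (h n hn).trans ?_
    unfold gg
    rw [div_eq_mul_inv]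
    apply mul_le_mul_of_nonneg_left _ hC
    apply inv_anti₀ (Real.sqrt_pos.2 (by linarith))
    exact Real.sqrt_le_iff.2 ⟨by linarith, by nlinarith⟩
  refine ((h1.const_mul_left (1/2)).add (MM_log γ α hγ hα)).congr' ?_ EventuallyEq.rfl
  filter_upwards [eventually_gt_atTop 0] with n hn
  have hn' : (0:ℝ) < n := by exact_mod_cast hn
  have g1 := Real.Gamma_pos_of_pos (show 0 < (n:ℝ)+γ+1 by linarith)
  have g2 := Real.Gamma_pos_of_pos (show 0 < γ+1 by linarith)
  have g3 := Real.Gamma_pos_of_pos hn'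
  have hM := MM_pos γ α hγ hα n
  have hf : (n.factorial : ℝ) = n * Real.Gamma n := by
    rw [← Real.Gamma_add_one hn'.ne', Real.Gamma_nat_eq_factorial]
  have hlp : Real.log (pp γ α n) = (Real.log (Real.Gamma (n+γ+1)) - (Real.log n + Real.log (Real.Gamma n))
      + Real.log (Real.Gamma (γ+1)))/2 + Real.log (MM γ α n) := by
    unfold pp
    rw [hf, Real.log_mul (by positivity) (by positivity), one_div, Real.log_inv,
      Real.log_mul (by positivity) (by positivity),
      Real.log_sqrt (by positivity), Real.log_div (by positivity) (by positivity),
      Real.log_div (by positivity) (by positivity), Real.log_mul (by positivity) (by positivity)]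
    ring
  rw [hlp, Real.log_mul hα.ne' hn'.ne', Real.sqrt_mul hα.le, add_assoc (n:ℝ)]
  ring


lemma stolz {a G : ℕ → ℝ} {K : ℝ} {N : ℕ} (hK : 0 < K) (hG : 0 < G N)
    (h : ∀ n, N ≤ n → |a (n+1) - a n| ≤ K * (G (n+1) - G n)) :
    ∀ n, N ≤ n → |a n| ≤ (|a N| / G N + K) * G n := by
  have key : ∀ n, N ≤ n → G N ≤ G n ∧ |a n| ≤ |a N| + K * (G n - G N) := by
    intro n hn
    induction n, hn using Nat.le_induction with
    | base => simp
    | succ n hn ih =>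
      have h1 := h n hn
      have h2 : 0 ≤ G (n+1) - G n := by
        have := (abs_nonneg _).trans h1
        exact nonneg_of_mul_nonneg_right this hK
      refine ⟨by linarith [ih.1], ?_⟩
      have h3 : |a (n+1)| ≤ |a (n+1) - a n| + |a n| := by
        have := abs_add_le (a (n+1) - a n) (a n)
        rwa [sub_add_cancel] at this
      linarith [ih.2]
  intro n hn
  obtain ⟨h1, h2⟩ := key n hn
  have h3 : |a N| ≤ |a N| / G N * G n := by
    rw [div_mul_eq_mul_div, le_div_iff₀ hG]
    exact mul_le_mul_of_nonneg_left h1 (abs_nonneg _)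
  have : 0 < K * G N := by positivity
  linarith

lemma sqrt_diff (n : ℕ) (hn : 0 < n) : ∃ d : ℝ, Real.sqrt ((n+1:ℕ):ℝ) = Real.sqrt n + d ∧ 0 < d ∧
    d ≤ 1/(2*Real.sqrt n) ∧ |d - 1/(2*Real.sqrt n)| ≤ 1/(Real.sqrt n)^2 ∧
    1/(2*Real.sqrt ((n+1:ℕ):ℝ)) ≤ d := by
  have hn' : (1:ℝ) ≤ n := by exact_mod_cast hn
  have h1 : Real.sqrt n ^2 = n := Real.sq_sqrt (by positivity)
  have h2 : Real.sqrt ((n+1:ℕ):ℝ) ^2 = n+1 := by rw [Real.sq_sqrt (by positivity)]; push_cast; ring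
  have hr1 : 1 ≤ Real.sqrt n := by rw [Real.one_le_sqrt]; exact hn'
  have hrs : Real.sqrt n ≤ Real.sqrt ((n+1:ℕ):ℝ) := Real.sqrt_le_sqrt (by push_cast; linarith)
  set r := Real.sqrt n
  set s := Real.sqrt ((n+1:ℕ):ℝ)
  have hd : (s - r) * (s + r) = 1 := by nlinarith
  have hd' : s - r = 1/(s+r) := by rw [eq_div_iff (by positivity)]; exact hd
  have hup : s - r ≤ 1/(2*r) := by
    rw [hd']; exact one_div_le_one_div_of_le (by positivity) (by linarith)
  have hpos : 0 < s - r := by rw [hd']; have : 0 < s + r := by linarith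
                              positivity
  refine ⟨s - r, by ring, hpos, hup, ?_, ?_⟩
  · rw [abs_of_nonpos (by linarith), neg_sub]
    have : 1/(2*r) - (s-r) = (s-r)*((s-r)/(2*r)) := by
      field_simp
      nlinarith
    rw [this]
    have h5 : 1/(2*r) ≤ 1/r := one_div_le_one_div_of_le (by positivity) (by linarith)
    have h6 : (s-r)/(2*r) ≤ 1/r := by
      rw [div_le_div_iff₀ (by positivity) (by positivity)]
      have : s - r ≤ 2 := by
        have : 1/(2*r) ≤ 1 := by rw [div_le_one (by positivity)]; linarith
        linarith
      nlinarith
    calc _ ≤ (1/r)*(1/r) := by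
          apply mul_le_mul (hup.trans h5) h6 (by positivity) (by positivity)
      _ = _ := by field_simp
  · rw [hd']; exact one_div_le_one_div_of_le (by linarith) (by linarith)

/-- increments of `e^{β√n}` -/
lemma exp_sqrt_diff (β : ℝ) (hβ : 0 < β) : ∃ C : ℝ, 0 ≤ C ∧ ∀ n : ℕ, 0 < n →
    |Real.exp (β * Real.sqrt ((n+1:ℕ):ℝ)) - Real.exp (β * Real.sqrt n)
      - Real.exp (β * Real.sqrt n) * (β / (2*Real.sqrt n))| ≤
      C * (Real.exp (β * Real.sqrt n) / (Real.sqrt n)^2) := by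
  refine ⟨β^2 * Real.exp β + β, by positivity, fun n hn => ?_⟩
  obtain ⟨d, hd, hd0, hd1, hd2, -⟩ := sqrt_diff n hn
  have hn' : (1:ℝ) ≤ n := by exact_mod_cast hn
  have hr1 : 1 ≤ Real.sqrt n := by rw [Real.one_le_sqrt]; exact hn'
  rw [hd, mul_add, Real.exp_add]
  set r := Real.sqrt n
  set E := Real.exp (β*r) with hE
  have hE0 : 0 < E := Real.exp_pos _
  have h1 := exp_quad (β*d)
  have hdr : d ≤ 1/r := hd1.trans (one_div_le_one_div_of_le (by positivity) (by linarith))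
  have hd3 : d ≤ 1 := hdr.trans (by rw [div_le_one (by positivity)]; exact hr1)
  rw [abs_of_pos (show 0 < β*d by positivity)] at h1
  have h2 : (β*d)^2 * Real.exp (β*d) ≤ β^2 * Real.exp β * (1/r^2) := by
    calc _ ≤ (β*(1/r))^2 * Real.exp β := by
          gcongr
          exact mul_le_of_le_one_right hβ.le hd3
      _ = _ := by field_simp
  have h3 : |β*(d - 1/(2*r))| ≤ β*(1/r^2) := by
    rw [abs_mul, abs_of_pos hβ]; gcongr
  have e : E * Real.exp (β*d) - E - E*(β/(2*r)) =
    E * ((Real.exp (β*d) - 1 - β*d) + β*(d - 1/(2*r))) := by field_simp; ring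
  rw [e, abs_mul, abs_of_pos hE0]
  calc _ ≤ E * (β^2 * Real.exp β * (1/r^2) + β*(1/r^2)) := by
        apply mul_le_mul_of_nonneg_left _ hE0.le
        exact (abs_add_le _ _).trans (add_le_add (h1.trans h2) h3)
    _ = _ := by field_simp

lemma G_diff (β : ℝ) (hβ : 0 < β) (n : ℕ) (hn : 0 < n) (hb : 2/β ≤ Real.sqrt n) :
    Real.exp (β * Real.sqrt n) / (Real.sqrt n)^2 ≤ (8/β) *
     (Real.exp (β * Real.sqrt ((n+1:ℕ):ℝ)) / Real.sqrt ((n+1:ℕ):ℝ) - Real.exp (β * Real.sqrt n) / Real.sqrt n) := by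
  obtain ⟨d, hd, hd0, -, -, hd3⟩ := sqrt_diff n hn
  have hn' : (1:ℝ) ≤ n := by exact_mod_cast hn
  have hr1 : 1 ≤ Real.sqrt n := by rw [Real.one_le_sqrt]; exact hn'
  have h1 : Real.sqrt n ^2 = n := Real.sq_sqrt (by positivity)
  have h2 : Real.sqrt ((n+1:ℕ):ℝ) ^2 = n+1 := by rw [Real.sq_sqrt (by positivity)]; push_cast; ring
  have hx : Real.exp (β * Real.sqrt ((n+1:ℕ):ℝ)) = Real.exp (β * Real.sqrt n) * Real.exp (β*d) := by
    rw [hd, mul_add, Real.exp_add]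
  rw [hx]
  set r := Real.sqrt n
  set s := Real.sqrt ((n+1:ℕ):ℝ)
  set E := Real.exp (β*r) with hE
  have hE0 : 0 < E := Real.exp_pos _
  have hs0 : 0 < s := by linarith
  have hr0 : 0 < r := by linarith
  have h3 := Real.add_one_le_exp (β*d)
  have h4 : E*(1+β*d)/s ≤ E * Real.exp (β*d)/s := by
    gcongr; linarith
  have h5 : E*(1+β*d)/s - E/r = E*(d/s*(β - 1/r)) := by
    field_simp
    rw [hd]; ring
  have h6 : β/2 ≤ β - 1/r := by
    have : 1/r ≤ β/2 := by
      rw [div_le_div_iff₀ hr0 two_pos]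
      rw [div_le_iff₀ hβ] at hb; linarith
    linarith
  have h7 : 1/(4*r^2) ≤ d/s := by
    calc 1/(4*r^2) ≤ 1/(2*s^2) := by
          apply one_div_le_one_div_of_le (by positivity); rw [h1, h2]; linarith
      _ = 1/(2*s)/s := by field_simp
      _ ≤ d/s := by gcongr
  have h8 : 1/(4*r^2)*(β/2) ≤ d/s*(β-1/r) := by
    apply mul_le_mul h7 h6 (by positivity) (by positivity)
  calc E/r^2 = (8/β)*(E*(1/(4*r^2)*(β/2))) := by field_simp; ring
    _ ≤ (8/β)*(E*(d/s*(β - 1/r))) := by gcongr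
    _ ≤ _ := by
      rw [← h5]; gcongr

lemma sum_asymp (P : ℕ → ℝ) (A β : ℝ) (hA : 0 < A) (hβ : 0 < β)
    (hP : (fun n => P n / (A * (Real.exp (β*Real.sqrt n) / Real.sqrt n)) - 1) =O[atTop] gg) :
    (fun n => (∑ k ∈ Finset.range n, P k) / (2*A/β * Real.exp (β*Real.sqrt n)) - 1) =O[atTop] gg := by
  obtain ⟨C0, hC0, hP⟩ := hP.exists_nonneg
  rw [isBigOWith_iff] at hP
  obtain ⟨C1, hC1, hF⟩ := exp_sqrt_diff β hβ
  have hev : ∀ᶠ n : ℕ in atTop, 2/β ≤ Real.sqrt n :=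
    (Real.tendsto_sqrt_atTop.comp tendsto_natCast_atTop_atTop).eventually_ge_atTop _
  obtain ⟨N, hN⟩ := eventually_atTop.1 (hP.and (hev.and (eventually_gt_atTop 0)))
  set G : ℕ → ℝ := fun n => Real.exp (β*Real.sqrt n) / Real.sqrt n with hGdef
  set a : ℕ → ℝ := fun n => ∑ k ∈ Finset.range n, P k - 2*A/β * Real.exp (β*Real.sqrt n) with ha
  have hGp : ∀ n : ℕ, 0 < n → 0 < G n := by
    intro n hn
    have : 0 < Real.sqrt (n:ℝ) := Real.sqrt_pos.2 (by exact_mod_cast hn)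
    simp only [hGdef]; positivity
  set K := A*C0 + 2*A/β*C1 + 1 with hK
  have hK0 : 0 < K := by positivity
  have hst := stolz (a := a) (G := G) (K := K*(8/β)) (N := N) (by positivity)
    (hGp N (hN N le_rfl).2.2) (by
      intro n hn
      obtain ⟨p1, p2, p3⟩ := hN n hn
      have hr : 0 < Real.sqrt (n:ℝ) := Real.sqrt_pos.2 (by exact_mod_cast p3)
      have q1 := hF n p3
      have q2 := G_diff β hβ n p3 p2
      have e1 : a (n+1) - a n = P n - 2*A/β*(Real.exp (β * Real.sqrt ((n+1:ℕ):ℝ)) - Real.exp (β * Real.sqrt n)) := by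
        simp only [ha, Finset.sum_range_succ]; ring
      have hGn := hGp n p3
      rw [Real.norm_eq_abs, Real.norm_eq_abs, abs_of_nonneg (gg_nonneg n)] at p1
      have e2 : |P n - A * G n| ≤ A*C0*(Real.exp (β * Real.sqrt n) / (Real.sqrt n)^2) := by
        have : P n - A * G n = (P n / (A*G n) - 1) * (A*G n) := by field_simp
        rw [this, abs_mul, abs_of_pos (show 0 < A * G n by positivity)]
        calc _ ≤ C0 * gg n * (A * G n) := by gcongr
          _ = _ := by simp only [gg, hGdef]; field_simp
      have e3 : a (n+1) - a n = (P n - A*G n) - 2*A/β*(Real.exp (β * Real.sqrt ((n+1:ℕ):ℝ)) - Real.exp (β * Real.sqrt n)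
      - Real.exp (β * Real.sqrt n) * (β / (2*Real.sqrt n))) := by
        rw [e1]; simp only [hGdef]; field_simp; ring
      rw [e3]
      have e4 : 0 ≤ Real.exp (β * Real.sqrt n) / (Real.sqrt n)^2 := by positivity
      calc _ ≤ |P n - A*G n| + |2*A/β*(Real.exp (β * Real.sqrt ((n+1:ℕ):ℝ)) - Real.exp (β * Real.sqrt n)
      - Real.exp (β * Real.sqrt n) * (β / (2*Real.sqrt n)))| := abs_sub _ _
        _ ≤ A*C0*(Real.exp (β * Real.sqrt n) / (Real.sqrt n)^2) + 2*A/β*(C1*(Real.exp (β * Real.sqrt n) / (Real.sqrt n)^2)) := by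
          rw [abs_mul, abs_of_pos (show 0 < 2*A/β by positivity)]
          gcongr
        _ ≤ K*(Real.exp (β * Real.sqrt n) / (Real.sqrt n)^2) := by rw [hK]; linarith
        _ ≤ K*((8/β) * (G (n+1) - G n)) := mul_le_mul_of_nonneg_left q2 hK0.le
        _ = _ := by ring)
  set L := |a N| / G N + K*(8/β) with hL
  refine IsBigO.of_bound (L / (2*A/β)) ?_
  filter_upwards [eventually_ge_atTop N, eventually_gt_atTop 0] with n hn hn0
  have h1 := hst n hn
  have hr : 0 < Real.sqrt (n:ℝ) := Real.sqrt_pos.2 (by exact_mod_cast hn0)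
  rw [Real.norm_eq_abs, Real.norm_eq_abs, abs_of_nonneg (gg_nonneg n)]
  have hE := Real.exp_pos (β*Real.sqrt n)
  have : (∑ k ∈ Finset.range n, P k) / (2*A/β * Real.exp (β*Real.sqrt n)) - 1 =
    a n / (2*A/β * Real.exp (β*Real.sqrt n)) := by
    simp only [ha]; rw [sub_div, div_self (by positivity)]
  rw [this, abs_div, abs_of_pos (show 0 < 2*A/β * Real.exp (β*Real.sqrt n) by positivity),
    div_le_iff₀ (by positivity)]
  refine h1.trans (le_of_eq ?_)
  simp only [hGdef, gg]
  field_simp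


lemma lagOrth_eq (γ α : ℝ) (hγ : -1 < γ) (n : ℕ) :
    lagOrth γ α n 0 = (-1)^n * pp γ α n := by
  have hg : genBinom ((n:ℝ)+γ) n = Real.Gamma (n+γ+1) / (n.factorial : ℝ) / Real.Gamma (γ+1) := by
    unfold genBinom
    rw [Real.Gamma_nat_eq_factorial, show (n:ℝ)+γ-n+1 = γ+1 by ring, div_div]
  have hl : lagP γ n (0-α) = Real.Gamma (n+γ+1) / (n.factorial : ℝ) * MM γ α n := by
    unfold lagP MM
    rw [Finset.mul_sum]
    refine Finset.sum_congr rfl (fun k hk => ?_)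
    have hk' : k ≤ n := by simp at hk; omega
    have hk0 : (0:ℝ) ≤ k := by positivity
    unfold genBinom
    rw [Real.Gamma_nat_eq_factorial, Nat.cast_sub hk',
      show (n:ℝ)+γ-(n-k)+1 = k+γ+1 by ring, Nat.cast_choose ℝ hk', show -(0-α) = α by ring]
    have h1 : (n.factorial : ℝ) ≠ 0 := by positivity
    have h2 : (k.factorial : ℝ) ≠ 0 := by positivity
    have h3 : ((n-k).factorial : ℝ) ≠ 0 := by positivity
    have h4 := (Real.Gamma_pos_of_pos (show 0 < (k:ℝ)+γ+1 by linarith)).ne'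
    field_simp
  unfold lagOrth
  rw [hg, hl]
  unfold pp
  ring

/-- main term of `log p_n` -/
noncomputable def LL (α c : ℝ) (n : ℕ) : ℝ := 2*Real.sqrt α * Real.sqrt n - Real.log n / 4 + c

lemma LL_shift (α c : ℝ) : (fun n => LL α c (n+1) - LL α c n) =O[atTop] gg := by
  refine IsBigO.of_bound (2*Real.sqrt α + 1) ?_
  filter_upwards [eventually_gt_atTop 0] with n hn
  obtain ⟨d, hd, hd0, hd1, -, -⟩ := sqrt_diff n hn
  have hn' : (1:ℝ) ≤ n := by exact_mod_cast hn
  have hr1 : 1 ≤ Real.sqrt n := by rw [Real.one_le_sqrt]; exact hn'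
  have h1 : Real.sqrt n ^2 = n := Real.sq_sqrt (by positivity)
  have hl : Real.log ((n+1:ℕ):ℝ) = Real.log n + Real.log (1 + 1/n) := by
    rw [← Real.log_mul (by positivity) (by positivity)]
    congr 1; push_cast; field_simp
  have hi : 0 < 1/(n:ℝ) := by positivity
  have hl1 := log_hi (u := 1/(n:ℝ)) (by linarith)
  have hl0 : 0 ≤ Real.log (1+1/(n:ℝ)) := Real.log_nonneg (by linarith)
  have hi2 : 1/(n:ℝ) ≤ gg n := by
    unfold gg
    rw [← one_div]
    apply one_div_le_one_div_of_le (by positivity); nlinarith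
  have hd2 : d ≤ gg n := by
    refine hd1.trans ?_
    unfold gg
    rw [← one_div]
    exact one_div_le_one_div_of_le (by positivity) (by linarith)
  rw [Real.norm_eq_abs, Real.norm_eq_abs, abs_of_nonneg (gg_nonneg n)]
  unfold LL
  rw [hd, hl]
  have hs := Real.sqrt_nonneg α
  have h5 : 0 ≤ Real.sqrt α * d := by positivity
  have h6 : Real.sqrt α * d ≤ Real.sqrt α * gg n := by gcongr
  rw [abs_le]
  have := mul_nonneg hs (gg_nonneg n)
  constructor <;> linarith

lemma gg_shift : (fun n => gg n) =O[atTop] (fun n => gg (n+1)) := by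
  refine IsBigO.of_bound 2 ?_
  filter_upwards [eventually_gt_atTop 0] with n hn
  have hn' : (1:ℝ) ≤ n := by exact_mod_cast hn
  rw [Real.norm_eq_abs, Real.norm_eq_abs, abs_of_nonneg (gg_nonneg n), abs_of_nonneg (gg_nonneg _)]
  unfold gg
  have h0 : 0 < Real.sqrt (n:ℝ) := Real.sqrt_pos.2 (by linarith)
  have h0' : 0 < Real.sqrt ((n+1:ℕ):ℝ) := Real.sqrt_pos.2 (by positivity)
  rw [← one_div, ← div_eq_mul_inv, div_le_div_iff₀ h0 h0', one_mul]
  rw [show (2:ℝ) = Real.sqrt 4 by rw [show (4:ℝ) = 2^2 by norm_num, Real.sqrt_sq (by norm_num)],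
    ← Real.sqrt_mul (by norm_num)]
  apply Real.sqrt_le_sqrt
  push_cast; linarith

lemma gg_inv : (fun n : ℕ => 1/(n:ℝ)) =O[atTop] gg := by
  refine IsBigO.of_bound 1 ?_
  filter_upwards [eventually_gt_atTop 0] with n hn
  have hn' : (1:ℝ) ≤ n := by exact_mod_cast hn
  have hr1 : 1 ≤ Real.sqrt n := by rw [Real.one_le_sqrt]; exact hn'
  have h1 : Real.sqrt n ^2 = n := Real.sq_sqrt (by positivity)
  rw [Real.norm_eq_abs, Real.norm_eq_abs, abs_of_nonneg (gg_nonneg n), abs_of_nonneg (by positivity), one_mul]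
  unfold gg
  rw [← one_div]
  apply one_div_le_one_div_of_le (by positivity); nlinarith

lemma log_omega (S n g a b α : ℝ) (hS : 0 < S) (hn : 0 < n) (hg : 0 < g) (ha : 0 < a) (hb : 0 < b)
    (hα : 0 < α) : Real.log (S / (n * Real.sqrt g * (a * b)) * (2*Real.sqrt (α*n))) =
      Real.log S - (Real.log n + Real.log g / 2 + (Real.log a + Real.log b))
        + (Real.log 2 + (Real.log α + Real.log n)/2) := by
  have h1 := Real.sqrt_pos.2 hg
  have h2 := Real.sqrt_pos.2 (mul_pos hα hn)
  rw [Real.log_mul (by positivity) (by positivity), Real.log_div hS.ne' (by positivity),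
    Real.log_mul (by positivity) (by positivity), Real.log_mul hn.ne' h1.ne',
    Real.log_mul ha.ne' hb.ne', Real.log_mul two_ne_zero h2.ne',
    Real.log_sqrt hg.le, Real.log_sqrt (mul_pos hα hn).le, Real.log_mul hα.ne' hn.ne']

set_option maxHeartbeats 2000000 in
theorem stmt17_aux (γ α : ℝ) (hγ : -1 < γ) (hα : 0 < α)
    (x ω : ℕ → ℝ)
    (hx : ∀ n : ℕ, x n = Real.log (∑ k ∈ Finset.range n, (lagOrth γ α k 0) ^ 2))
    (hω : ∀ n : ℕ, ω n = -(∑ k ∈ Finset.range n, (lagOrth γ α k 0) ^ 2) /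
      (Real.sqrt ((n : ℝ) * ((n : ℝ) + γ)) * lagOrth γ α (n - 1) 0 * lagOrth γ α n 0)) :
    (fun n : ℕ => x n -
        (4 * Real.sqrt (α * n) +
          Real.log (Real.Gamma (γ + 1) / (8 * Real.pi * α ^ (γ + 1) * Real.exp α))))
      =O[atTop] (fun n : ℕ => ((n : ℝ)) ^ (-(1 : ℝ) / 2)) ∧
    (fun n : ℕ => ω n - 1 / (2 * Real.sqrt (α * n))) =O[atTop] (fun n : ℕ => 1 / (n : ℝ)) := by
  have hgam := Real.Gamma_pos_of_pos (show 0 < γ+1 by linarith)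
  have hpi := Real.pi_pos
  have hsa : 0 < Real.sqrt α := Real.sqrt_pos.2 hα
  set c := Real.log (Real.Gamma (γ+1))/2 - Real.log 2 - Real.log Real.pi / 2
      - α/2 - (γ+1/2) * Real.log α / 2 with hc
  have hpl : (fun n => Real.log (pp γ α n) - LL α c n) =O[atTop] gg := pp_log γ α hγ hα
  have hpp := pp_pos γ α hγ hα
  have hsq : ∀ k, (lagOrth γ α k 0)^2 = (pp γ α k)^2 := by
    intro k
    rw [lagOrth_eq γ α hγ, mul_pow, ← pow_mul, mul_comm k 2, pow_mul]; norm_num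
  simp only [hsq] at hx hω
  set S : ℕ → ℝ := fun n => ∑ k ∈ Finset.range n, (pp γ α k)^2 with hS
  have hSp : ∀ n, 0 < n → 0 < S n := by
    intro n hn
    exact Finset.sum_pos (fun k _ => pow_pos (hpp k) 2) ⟨0, by simpa using hn⟩
  have hP := exp_isBigO (hpl.const_mul_left 2)
  have hP' : (fun n : ℕ => (pp γ α n)^2 / (Real.exp (2*c) * (Real.exp (4*Real.sqrt α*Real.sqrt n) / Real.sqrt n)) - 1) =O[atTop] gg := by
    refine hP.congr' ?_ EventuallyEq.rfl
    filter_upwards [eventually_gt_atTop 0] with n hn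
    have hn' : (0:ℝ) < n := by exact_mod_cast hn
    have hr : 0 < Real.sqrt (n:ℝ) := Real.sqrt_pos.2 hn'
    have hq := hpp n
    congr 1
    rw [← Real.exp_log (show 0 < (pp γ α n)^2 / (Real.exp (2*c) * (Real.exp (4*Real.sqrt α*Real.sqrt n) / Real.sqrt n)) by positivity)]
    congr 1
    rw [Real.log_div (by positivity) (by positivity), Real.log_mul (by positivity) (by positivity),
      Real.log_div (by positivity) (by positivity), Real.log_exp, Real.log_exp, Real.log_sqrt hn'.le,
      Real.log_pow]
    unfold LL
    push_cast
    ring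
  have hSl := log_isBigO (sum_asymp _ _ _ (Real.exp_pos (2*c)) (show 0 < 4*Real.sqrt α by positivity) hP')
  have hX : (fun n => Real.log (S n) - (4*Real.sqrt α*Real.sqrt n + 2*c - Real.log 2 - Real.log α/2)) =O[atTop] gg := by
    refine hSl.congr' ?_ EventuallyEq.rfl
    filter_upwards [eventually_gt_atTop 0] with n hn
    have hSn := hSp n hn
    rw [Real.log_div hSn.ne' (by positivity), Real.log_mul (by positivity) (by positivity),
      Real.log_div (by positivity) (by positivity), Real.log_mul (by positivity) (by positivity),
      Real.log_mul (by positivity) (by positivity), Real.log_exp, Real.log_exp, Real.log_sqrt hα.le,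
      show (4:ℝ) = 2^2 by norm_num, Real.log_pow]
    push_cast
    ring
  constructor
  · refine (hX.congr' ?_ ?_)
    · filter_upwards [eventually_gt_atTop 0] with n hn
      have hap := Real.rpow_pos_of_pos hα (γ+1)
      rw [hx, Real.sqrt_mul hα.le, Real.log_div (by positivity) (by positivity),
        Real.log_mul (by positivity) (by positivity), Real.log_mul (by positivity) (by positivity),
        Real.log_mul (by positivity) (by positivity), Real.log_exp, Real.log_rpow hα,
        show (8:ℝ) = 2^3 by norm_num, Real.log_pow, hc]
      push_cast
      ring
    · filter_upwards [eventually_gt_atTop 0] with n hn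
      have hn' : (0:ℝ) < n := by exact_mod_cast hn
      unfold gg
      rw [Real.sqrt_eq_rpow, ← Real.rpow_neg hn'.le]
      norm_num
  · -- the weights
    have hs1 : (fun n => Real.log (pp γ α (n-1)) - LL α c n) =O[atTop] gg := by
      have h1 : (fun n => Real.log (pp γ α n) - LL α c (n+1)) =O[atTop] gg := by
        refine (hpl.sub (LL_shift α c)).congr_left (fun n => ?_)
        ring
      have h2 := (h1.trans gg_shift).comp_tendsto (tendsto_sub_atTop_nat 1)
      refine h2.congr' ?_ ?_
      · filter_upwards [eventually_gt_atTop 0] with n hn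
        simp only [Function.comp, Nat.sub_add_cancel hn]
      · filter_upwards [eventually_gt_atTop 0] with n hn
        simp only [Function.comp, Nat.sub_add_cancel hn]
    have hg : (fun n : ℕ => Real.log (1 + γ/n)) =O[atTop] gg := by
      apply log_isBigO
      refine (gg_inv.const_mul_left γ).congr_left (fun n => ?_)
      ring
    have hev : ∀ᶠ n : ℕ in atTop, 0 < 1 + γ/(n:ℝ) := by
      filter_upwards [eventually_gt_atTop 0] with n hn
      have hn' : (1:ℝ) ≤ n := by exact_mod_cast hn
      have : 1 + γ/(n:ℝ) = (n+γ)/n := by field_simp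
      rw [this]; apply div_pos <;> linarith
    have hlw := exp_isBigO (((hX.sub (hg.const_mul_left (1/2))).sub hs1).sub hpl)
    have hmain : (fun n : ℕ => (1 / (2 * Real.sqrt (α * n))) * (ω n * (2*Real.sqrt (α*n)) - 1))
        =O[atTop] (fun n => gg n * gg n) := by
      apply IsBigO.mul
      · refine IsBigO.of_bound (1/(2*Real.sqrt α)) (Eventually.of_forall fun n => ?_)
        rw [Real.norm_eq_abs, Real.norm_eq_abs, abs_of_nonneg (gg_nonneg n),
          abs_of_nonneg (by positivity), Real.sqrt_mul hα.le]
        unfold gg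
        apply le_of_eq
        rw [one_div, one_div, mul_inv, mul_inv, mul_inv]; ring
      · refine hlw.congr' ?_ EventuallyEq.rfl
        filter_upwards [eventually_gt_atTop 0, hev] with n hn hev
        have hn' : (0:ℝ) < n := by exact_mod_cast hn
        have hr : 0 < Real.sqrt (n:ℝ) := Real.sqrt_pos.2 hn'
        have hSn := hSp n hn
        have hq := hpp n
        have hq1 := hpp (n-1)
        have hsgn : lagOrth γ α (n-1) 0 * lagOrth γ α n 0 = -(pp γ α (n-1) * pp γ α n) := by
          rw [lagOrth_eq γ α hγ, lagOrth_eq γ α hγ]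
          obtain ⟨m, rfl⟩ : ∃ m, n = m+1 := ⟨n-1, by omega⟩
          simp only [Nat.add_sub_cancel]
          have : ((-1:ℝ)^m)*((-1)^m) = 1 := by rw [← mul_pow]; norm_num
          calc _ = -(((-1:ℝ)^m)*((-1)^m)) * (pp γ α m * pp γ α (m+1)) := by ring
            _ = _ := by rw [this]; ring
        have hw : ω n = S n / (n * Real.sqrt (1+γ/n) * (pp γ α (n-1) * pp γ α n)) := by
          rw [hω, mul_assoc, hsgn, show (n:ℝ)*(n+γ) = n^2 * (1+γ/n) by field_simp,
            Real.sqrt_mul (by positivity), Real.sqrt_sq hn'.le, mul_neg, neg_div_neg_eq]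
        have hsg := Real.sqrt_pos.2 hev
        have hwp : 0 < ω n := by
          rw [hw]
          exact div_pos hSn (mul_pos (mul_pos hn' hsg) (mul_pos hq1 hq))
        congr 1
        have hya : 0 < Real.sqrt (α*n) := Real.sqrt_pos.2 (by positivity)
        rw [← Real.exp_log (mul_pos hwp (mul_pos two_pos hya))]
        congr 1
        rw [hw, log_omega _ _ _ _ _ _ hSn hn' hev hq1 hq hα]
        unfold LL
        ring
    refine hmain.congr' ?_ ?_
    · filter_upwards [eventually_gt_atTop 0] with n hn
      have hn' : (0:ℝ) < n := by exact_mod_cast hn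
      have hya : 0 < Real.sqrt (α*n) := Real.sqrt_pos.2 (by positivity)
      field_simp
    · filter_upwards with n
      unfold gg
      rw [← mul_inv, Real.mul_self_sqrt (by positivity), one_div]

/-- Asymptotics of the Laguerre peakon data: with
`e^{x_n} = ∑_{k=0}^{n-1} P_k(0)²` and `ω_n = -(∑_{k=0}^{n-1} P_k(0)²)/(b_{n-1} P_{n-1}(0) P_n(0))`,
where `b_{n-1} = √(n(n+γ))`, one has, as `n → ∞`,
`x_n = 4√(αn) + log (Γ(γ+1)/(8π α^{γ+1} e^α)) + O(n^{-1/2})` and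
`ω_n = 1/(2√(αn)) + O(1/n)`. -/
theorem stmt17 (γ α : ℝ) (hγ : -1 < γ) (hα : 0 < α)
    (x ω : ℕ → ℝ)
    (hx : ∀ n : ℕ, x n = Real.log (∑ k ∈ Finset.range n, (lagOrth γ α k 0) ^ 2))
    (hω : ∀ n : ℕ, ω n = -(∑ k ∈ Finset.range n, (lagOrth γ α k 0) ^ 2) /
      (Real.sqrt ((n : ℝ) * ((n : ℝ) + γ)) * lagOrth γ α (n - 1) 0 * lagOrth γ α n 0)) :
    (fun n : ℕ => x n -
        (4 * Real.sqrt (α * n) +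
          Real.log (Real.Gamma (γ + 1) / (8 * Real.pi * α ^ (γ + 1) * Real.exp α))))
      =O[atTop] (fun n : ℕ => ((n : ℝ)) ^ (-(1 : ℝ) / 2)) ∧
    (fun n : ℕ => ω n - 1 / (2 * Real.sqrt (α * n))) =O[atTop] (fun n : ℕ => 1 / (n : ℝ)) := 
  stmt17_aux γ α hγ hα x ω hx hω
end

section
/- Let x_n = 4√(αn) + c + O(n^{−ε}) and ω_n = (1/(2√(αn)))(1 + O(n^{−ε})) with ε > 1/3, α > 0, c ∈ ℝ, ω_n > 0, x_n strictly increasing. Then ∑_{n≥1} (1 − e^{x_{n−1}−x_n})³ < ∞ and ∑_{n≥1} (1 − e^{x_{n−1}−x_n}) (e^{x_n} ∑_{k≥n} ω_k e^{−x_k} − 1/(4α))² < ∞. -/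
open Filter Topology in
/-- Comparison of the model sum with its telescoping majorant. -/
lemma model_sum (α : ℝ) (hα : 0 < α) (n : ℕ) (hn : 1 ≤ n) :
    Summable (fun j : ℕ => Real.exp (4 * √(α * n) - 4 * √(α * (n + j : ℕ))) / (2 * √(α * (n + j : ℕ)))) ∧
    |(∑' j : ℕ, Real.exp (4 * √(α * n) - 4 * √(α * (n + j : ℕ))) / (2 * √(α * (n + j : ℕ))))
      - 1 / (4 * α)| ≤ 1 / (2 * √(α * n)) := by
  set s : ℕ → ℝ := fun k => 4 * √(α * k) with hs
  have hspos : ∀ k, 1 ≤ k → 0 < s k := by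
    intro k hk
    have : (0:ℝ) < k := by exact_mod_cast hk
    simp only [hs]; positivity
  have hsq : ∀ k, s k ^ 2 = 16 * α * k := by
    intro k
    simp only [hs, mul_pow]
    rw [Real.sq_sqrt (by positivity)]; ring
  set F : ℕ → ℝ := fun j => Real.exp (s n - s (n + j)) / (s (n + j) / 2) with hF
  set d : ℕ → ℝ := fun j =>
    (Real.exp (s n - s (n + j)) - Real.exp (s n - s (n + (j + 1)))) / (4 * α) with hd
  have hFeq : (fun j : ℕ => Real.exp (4 * √(α * n) - 4 * √(α * (n + j : ℕ))) / (2 * √(α * (n + j : ℕ)))) = F := by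
    funext j
    simp only [hF, hs]
    congr 1; ring
  rw [hFeq]
  have hF0 : F 0 = 1 / (2 * √(α * n)) := by
    simp only [hF, hs, add_zero, sub_self, Real.exp_zero]; congr 1; ring
  have hFnn : ∀ j, 0 ≤ F j := by
    intro j
    have := hspos (n + j) (by omega)
    simp only [hF]; positivity
  have key : ∀ j, d j ≤ F j ∧ F (j + 1) ≤ d j := by
    intro j
    have ha := hspos (n + j) (by omega)
    have hb := hspos (n + (j + 1)) (by omega)
    have h1 := hsq (n + j)
    have h2 := hsq (n + (j + 1))
    simp only [hd, hF]
    set a := s (n + j)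
    set b := s (n + (j + 1))
    have hdiff : (b - a) * (b + a) = 16 * α := by
      push_cast at h1 h2
      nlinarith
    have hab : a ≤ b := by
      by_contra h
      push Not at h
      nlinarith
    have hle : (b - a) / (4 * α) ≤ 1 / (a / 2) := by
      rw [div_le_div_iff₀ (by positivity) (by positivity)]
      nlinarith
    have hge : 1 / (b / 2) ≤ (b - a) / (4 * α) := by
      rw [div_le_div_iff₀ (by positivity) (by positivity)]
      nlinarith
    have e1 : Real.exp (s n - b) = Real.exp (s n - a) * Real.exp (a - b) := by
      rw [← Real.exp_add]; ring_nf
    have e2 : Real.exp (s n - a) = Real.exp (s n - b) * Real.exp (b - a) := by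
      rw [← Real.exp_add]; ring_nf
    constructor
    · calc (Real.exp (s n - a) - Real.exp (s n - b)) / (4 * α)
          = Real.exp (s n - a) * (1 - Real.exp (a - b)) / (4 * α) := by rw [e1]; ring
        _ ≤ Real.exp (s n - a) * (b - a) / (4 * α) := by
            have h : 1 - Real.exp (a - b) ≤ b - a := by linarith [Real.add_one_le_exp (a - b)]
            exact div_le_div_of_nonneg_right
              (mul_le_mul_of_nonneg_left h (Real.exp_pos _).le) (by positivity)
        _ = Real.exp (s n - a) * ((b - a) / (4 * α)) := by ring
        _ ≤ Real.exp (s n - a) * (1 / (a / 2)) := by gcongr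
        _ = _ := by ring
    · calc Real.exp (s n - b) / (b / 2) = Real.exp (s n - b) * (1 / (b / 2)) := by ring
        _ ≤ Real.exp (s n - b) * ((b - a) / (4 * α)) := by gcongr
        _ = Real.exp (s n - b) * (b - a) / (4 * α) := by ring
        _ ≤ Real.exp (s n - b) * (Real.exp (b - a) - 1) / (4 * α) := by
            have h : b - a ≤ Real.exp (b - a) - 1 := by linarith [Real.add_one_le_exp (b - a)]
            exact div_le_div_of_nonneg_right
              (mul_le_mul_of_nonneg_left h (Real.exp_pos _).le) (by positivity)
        _ = _ := by rw [e2]; ring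
  have hdnn : ∀ j, 0 ≤ d j := fun j => (hFnn _).trans (key j).2
  have hlim : Tendsto (fun N : ℕ => Real.exp (s n - s (n + N))) atTop (𝓝 0) := by
    apply Real.tendsto_exp_atBot.comp
    have h1 : Tendsto (fun N : ℕ => s (n + N)) atTop atTop := by
      have h0 : Tendsto (fun k : ℕ => s k) atTop atTop := by
        simp only [hs]
        apply Tendsto.const_mul_atTop (by norm_num)
        apply Real.tendsto_sqrt_atTop.comp
        exact Tendsto.const_mul_atTop hα tendsto_natCast_atTop_atTop
      apply h0.comp
      exact tendsto_atTop_mono (fun N => by simp) tendsto_id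
    have h2 := tendsto_atBot_add_const_left atTop (s n) (tendsto_neg_atTop_atBot.comp h1)
    simpa [sub_eq_add_neg, Function.comp_def] using h2
  have hdsum : HasSum d (1 / (4 * α)) := by
    rw [hasSum_iff_tendsto_nat_of_nonneg hdnn]
    have : ∀ N, ∑ i ∈ Finset.range N, d i = (1 - Real.exp (s n - s (n + N))) / (4 * α) := by
      intro N
      simp only [hd]
      rw [← Finset.sum_div, Finset.sum_range_sub' (fun j => Real.exp (s n - s (n + j)))]
      simp
    simp_rw [this]
    have := (tendsto_const_nhds (x := (1:ℝ))).sub hlim |>.div_const (4 * α)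
    simpa using this
  have hF1 : Summable (fun j => F (j + 1)) :=
    Summable.of_nonneg_of_le (fun j => hFnn _) (fun j => (key j).2) hdsum.summable
  have hFs : Summable F := (summable_nat_add_iff 1).1 hF1
  refine ⟨hFs, ?_⟩
  have hlow : 1 / (4 * α) ≤ ∑' j, F j := by
    rw [← hdsum.tsum_eq]
    exact hdsum.summable.tsum_le_tsum (fun j => (key j).1) hFs
  have hup : ∑' j, F (j + 1) ≤ 1 / (4 * α) := by
    rw [← hdsum.tsum_eq]
    exact hF1.tsum_le_tsum (fun j => (key j).2) hdsum.summable
  rw [abs_of_nonneg (by linarith), hFs.tsum_eq_zero_add, hF0]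
  linarith

lemma pert_bound (C E p q : ℝ) (hE : E ≤ C) (hp : |p| ≤ E) (hq : |q| ≤ 2 * E) :
    |(1 + p) * Real.exp q - 1| ≤ 3 * Real.exp (2 * C) * E := by
  have hq' := abs_le.1 hq
  have hp' := abs_le.1 hp
  have h1 : Real.exp q ≤ Real.exp (2 * C) := Real.exp_le_exp.2 (by linarith)
  have hE0 : 0 ≤ E := (abs_nonneg p).trans hp
  have h1' : 1 ≤ Real.exp (2 * C) := Real.one_le_exp (by linarith)
  have h2 : |Real.exp q - 1| ≤ 2 * E * Real.exp (2 * C) := by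
    rw [abs_le]
    constructor
    · nlinarith [Real.add_one_le_exp q]
    · have h3 : Real.exp q * Real.exp (-q) = 1 := by rw [← Real.exp_add]; simp
      have h4 : Real.exp q - 1 ≤ q * Real.exp q := by
        nlinarith [Real.add_one_le_exp (-q), Real.exp_pos q]
      have h5 : q * Real.exp q ≤ 2 * E * Real.exp q := by
        gcongr; exact hq'.2
      have h6 : 2 * E * Real.exp q ≤ 2 * E * Real.exp (2 * C) := by gcongr
      linarith
  calc |(1 + p) * Real.exp q - 1| = |p * Real.exp q + (Real.exp q - 1)| := by ring_nf
    _ ≤ |p * Real.exp q| + |Real.exp q - 1| := abs_add_le _ _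
    _ = |p| * Real.exp q + |Real.exp q - 1| := by rw [abs_mul, abs_of_pos (Real.exp_pos q)]
    _ ≤ E * Real.exp (2 * C) + 2 * E * Real.exp (2 * C) := by gcongr
    _ = _ := by ring

/-- The case `δ ≤ 1/2`: the tail sum differs from `1/(4α)` by `O(n^{-δ})`. -/
lemma tail_bound (α c δ : ℝ) (hα : 0 < α) (hδ : 1 / 3 < δ) (hδ2 : δ ≤ 1 / 2)
    (x ω : ℕ → ℝ) (C : ℝ) (hC : 0 < C)
    (hxasym : ∀ n : ℕ, 1 ≤ n → |x n - (4 * √(α * n) + c)| ≤ C * (n : ℝ) ^ (-δ))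
    (hωasym : ∀ n : ℕ, 1 ≤ n → |ω n * (2 * √(α * n)) - 1| ≤ C * (n : ℝ) ^ (-δ))
    (hsum : Summable fun k => ω k * Real.exp (-x k)) (n : ℕ) (hn : 1 ≤ n) :
    |Real.exp (x n) * (∑' k : ℕ, if n ≤ k then ω k * Real.exp (-x k) else 0) - 1 / (4 * α)|
      ≤ (3 * Real.exp (2 * C) * C * (1 / (4 * α) + 1 / (2 * √α)) + 1 / (2 * √α))
        * (n : ℝ) ^ (-δ) := by
  have hn1 : (1:ℝ) ≤ n := by exact_mod_cast hn
  have hn0 : (0:ℝ) < n := by linarith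
  have htail : (∑' k : ℕ, if n ≤ k then ω k * Real.exp (-x k) else 0)
      = ∑' j : ℕ, ω (n + j) * Real.exp (-x (n + j)) := by
    have hs : Summable (fun k : ℕ => if n ≤ k then ω k * Real.exp (-x k) else 0) := by
      rw [← summable_nat_add_iff n]
      have := (summable_nat_add_iff n).2 hsum
      simpa using this
    rw [← hs.sum_add_tsum_nat_add n, Finset.sum_eq_zero, zero_add]
    · apply tsum_congr
      intro j
      simp [add_comm]
    · intro i hi
      rw [if_neg]
      have := Finset.mem_range.1 hi
      omega
  obtain ⟨hFs, hFb⟩ := model_sum α hα n hn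
  set F : ℕ → ℝ := fun j : ℕ => Real.exp (4 * √(α * n) - 4 * √(α * (n + j : ℕ))) / (2 * √(α * (n + j : ℕ))) with hF
  set r : ℝ := (n : ℝ) ^ (-δ) with hr
  have hr0 : 0 < r := Real.rpow_pos_of_pos hn0 _
  have hr1 : r ≤ 1 := Real.rpow_le_one_of_one_le_of_nonpos hn1 (by linarith)
  set M := 3 * Real.exp (2 * C) * C
  have hM : 0 < M := by positivity
  have hterm : ∀ j : ℕ, |Real.exp (x n) * (ω (n + j) * Real.exp (-x (n + j))) - F j|
      ≤ M * r * F j := by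
    intro j
    have hk1 : 1 ≤ n + j := by omega
    have hk0 : (0:ℝ) < ((n + j : ℕ) : ℝ) := by exact_mod_cast hk1
    have hkr : ((n + j : ℕ) : ℝ) ^ (-δ) ≤ r := by
      apply Real.rpow_le_rpow_of_nonpos hn0 _ (by linarith)
      push_cast
      linarith [(Nat.cast_nonneg j : (0:ℝ) ≤ j)]
    have hxk := (hxasym _ hk1).trans (mul_le_mul_of_nonneg_left hkr hC.le)
    have hωk := (hωasym _ hk1).trans (mul_le_mul_of_nonneg_left hkr hC.le)
    have hxn := hxasym n hn
    rw [← hr] at hxn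
    have hFj : 0 ≤ F j := by simp only [hF]; positivity
    simp only [hF] at hFj ⊢
    set k := n + j
    have hu : 0 < 2 * √(α * k) := by positivity
    set p := ω k * (2 * √(α * k)) - 1 with hp
    set q := (x n - (4 * √(α * n) + c)) - (x k - (4 * √(α * k) + c)) with hq
    have hqb : |q| ≤ 2 * (C * r) := by
      calc |q| ≤ _ := abs_sub _ _
        _ ≤ _ := by linarith
    have hb := pert_bound C (C * r) p q (by nlinarith) hωk hqb
    have e : Real.exp (x n) * (ω k * Real.exp (-x k))
        - Real.exp (4 * √(α * n) - 4 * √(α * k)) / (2 * √(α * k))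
        = ((1 + p) * Real.exp q - 1) * (Real.exp (4 * √(α * n) - 4 * √(α * k)) / (2 * √(α * k))) := by
      have e1 : Real.exp (x n) * Real.exp (-x k) = Real.exp q * Real.exp (4 * √(α * n) - 4 * √(α * k)) := by
        rw [← Real.exp_add, ← Real.exp_add, hq]; ring_nf
      have e2 : ω k = (1 + p) / (2 * √(α * k)) := by
        rw [eq_div_iff hu.ne', hp]; ring
      rw [mul_left_comm, e1, e2]; ring
    rw [e, abs_mul, abs_of_nonneg hFj]
    calc _ ≤ (3 * Real.exp (2 * C) * (C * r)) * _ := mul_le_mul_of_nonneg_right hb hFj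
      _ = _ := by ring
  have hGs : Summable fun j : ℕ => Real.exp (x n) * (ω (n + j) * Real.exp (-x (n + j))) := by
    have := ((summable_nat_add_iff n).2 hsum).mul_left (Real.exp (x n))
    simpa [add_comm] using this
  have hdiff : |(∑' j : ℕ, Real.exp (x n) * (ω (n + j) * Real.exp (-x (n + j)))) - ∑' j, F j|
      ≤ M * r * ∑' j, F j := by
    rw [← hGs.tsum_sub hFs, ← tsum_mul_left]
    exact tsum_of_norm_bounded (hFs.mul_left (M * r)).hasSum
      (fun j => by rw [Real.norm_eq_abs]; exact hterm j)
  rw [htail, ← tsum_mul_left]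
  have hsq : 1 / (2 * √(α * n)) ≤ 1 / (2 * √α) * r := by
    have h1 : (n:ℝ) ^ (-(1/2:ℝ)) ≤ r := Real.rpow_le_rpow_of_exponent_le hn1 (by linarith)
    have h2 : (n:ℝ) ^ (-(1/2:ℝ)) = (√n)⁻¹ := by
      rw [Real.rpow_neg hn0.le, Real.sqrt_eq_rpow]
    rw [h2] at h1
    calc 1 / (2 * √(α * n)) = 1 / (2 * √α) * (√n)⁻¹ := by
          rw [Real.sqrt_mul hα.le]; field_simp
      _ ≤ _ := by gcongr
  have hA : 0 < 1 / (2 * √α) := by positivity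
  have hT : ∑' j, F j ≤ 1 / (4 * α) + 1 / (2 * √α) := by
    have := (abs_le.1 hFb).2
    nlinarith
  have h3 : M * r * ∑' j, F j ≤ M * r * (1 / (4 * α) + 1 / (2 * √α)) := by gcongr
  calc _ ≤ _ := abs_sub_le _ (∑' j, F j) _
    _ ≤ M * r * (1 / (4 * α) + 1 / (2 * √α)) + 1 / (2 * √α) * r :=
        add_le_add (hdiff.trans h3) (hFb.trans hsq)
    _ = _ := by ring

lemma gap_bound (α c δ : ℝ) (hα : 0 < α) (hδ : 1 / 3 < δ) (hδ2 : δ ≤ 1 / 2)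
    (x : ℕ → ℝ) (hmono : StrictMono x) (C : ℝ) (hC : 0 < C)
    (hxasym : ∀ n : ℕ, 1 ≤ n → |x n - (4 * √(α * n) + c)| ≤ C * (n : ℝ) ^ (-δ))
    (n : ℕ) (hn : 1 ≤ n) :
    0 ≤ 1 - Real.exp (x n - x (n + 1)) ∧
    1 - Real.exp (x n - x (n + 1)) ≤ (4 * √α + 2 * C) * (n : ℝ) ^ (-δ) := by
  have hn1 : (1:ℝ) ≤ n := by exact_mod_cast hn
  have hn0 : (0:ℝ) < n := by linarith
  constructor
  · have := hmono (Nat.lt_succ_self n)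
    have : Real.exp (x n - x (n + 1)) ≤ 1 := Real.exp_le_one_iff.2 (by simp at this; linarith)
    linarith
  · have h1 := (abs_le.1 (hxasym n hn)).1
    have h2 := (abs_le.1 (hxasym (n + 1) (by omega))).2
    have h3 : ((n + 1 : ℕ) : ℝ) ^ (-δ) ≤ (n:ℝ) ^ (-δ) := by
      apply Real.rpow_le_rpow_of_nonpos hn0 _ (by linarith)
      push_cast; linarith
    have h4 : (√n)⁻¹ ≤ (n:ℝ) ^ (-δ) := by
      have h1 : (n:ℝ) ^ (-(1/2:ℝ)) ≤ (n:ℝ) ^ (-δ) :=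
        Real.rpow_le_rpow_of_exponent_le hn1 (by linarith)
      rwa [Real.rpow_neg hn0.le, ← Real.sqrt_eq_rpow] at h1
    have h5 : √((n + 1 : ℕ) : ℝ) ≤ √n + (√n)⁻¹ := by
      have hs : 0 < √(n:ℝ) := Real.sqrt_pos.2 hn0
      apply Real.sqrt_le_iff.2 ⟨by positivity, ?_⟩
      have : √(n:ℝ) * (√n)⁻¹ = 1 := mul_inv_cancel₀ hs.ne'
      have hq := Real.sq_sqrt hn0.le
      push_cast
      nlinarith [sq_nonneg ((√(n:ℝ))⁻¹)]
    rw [Real.sqrt_mul hα.le] at h1 h2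
    have h6 : √α * √((n + 1 : ℕ) : ℝ) ≤ √α * (√n + (n:ℝ) ^ (-δ)) := by
      gcongr; linarith
    have h7 : C * ((n + 1 : ℕ) : ℝ) ^ (-δ) ≤ C * (n:ℝ) ^ (-δ) := by gcongr
    have := Real.add_one_le_exp (x n - x (n + 1))
    nlinarith

/-- Killip–Simon-type summability conditions for peakon data with Laguerre-type
asymptotics: if `x_n = 4√(αn) + c + O(n^{-ε})` and
`ω_n = (1/(2√(αn)))(1 + O(n^{-ε}))` with `ε > 1/3`, then
`∑ (1 - e^{x_{n-1}-x_n})³ < ∞` and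
`∑ (1 - e^{x_{n-1}-x_n}) (e^{x_n} ∑_{k≥n} ω_k e^{-x_k} - 1/(4α))² < ∞`. -/
theorem stmt19 (α c ε : ℝ) (hα : 0 < α) (hε : 1 / 3 < ε)
    (x ω : ℕ → ℝ) (hmono : StrictMono x) (hωpos : ∀ n : ℕ, 1 ≤ n → 0 < ω n)
    (C : ℝ) (hC : 0 < C)
    (hxasym : ∀ n : ℕ, 1 ≤ n →
      |x n - (4 * Real.sqrt (α * n) + c)| ≤ C * (n : ℝ) ^ (-ε))
    (hωasym : ∀ n : ℕ, 1 ≤ n →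
      |ω n * (2 * Real.sqrt (α * n)) - 1| ≤ C * (n : ℝ) ^ (-ε))
    (hsum : Summable fun k => ω k * Real.exp (-x k)) :
    Summable (fun n : ℕ => (1 - Real.exp (x n - x (n + 1))) ^ 3) ∧
    Summable (fun n : ℕ => (1 - Real.exp (x n - x (n + 1))) *
      (Real.exp (x (n + 1)) *
          (∑' k : ℕ, if n + 1 ≤ k then ω k * Real.exp (-x k) else 0) -
        1 / (4 * α)) ^ 2) := by
  obtain ⟨δ, hδ, hδ2, hδε⟩ : ∃ δ : ℝ, 1 / 3 < δ ∧ δ ≤ 1 / 2 ∧ δ ≤ ε :=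
    ⟨min ε (1 / 2), lt_min hε (by norm_num), min_le_right _ _, min_le_left _ _⟩
  have hpow : ∀ n : ℕ, 1 ≤ n → C * (n : ℝ) ^ (-ε) ≤ C * (n : ℝ) ^ (-δ) := by
    intro n hn
    have hn1 : (1:ℝ) ≤ n := by exact_mod_cast hn
    exact mul_le_mul_of_nonneg_left
      (Real.rpow_le_rpow_of_exponent_le hn1 (by linarith)) hC.le
  have hx' := fun n hn => (hxasym n hn).trans (hpow n hn)
  have hω' := fun n hn => (hωasym n hn).trans (hpow n hn)
  have hgap := gap_bound α c δ hα hδ hδ2 x hmono C hC hx'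
  have htail := tail_bound α c δ hα hδ hδ2 x ω C hC hx' hω' hsum
  have hS : Summable (fun n : ℕ => (((n + 1 : ℕ) : ℝ) ^ (-δ)) ^ 3) := by
    have h := (Real.summable_nat_rpow (p := -(3 * δ))).2 (by linarith)
    have h' := (summable_nat_add_iff 1).2 h
    refine h'.congr ?_
    intro n
    rw [← Real.rpow_natCast, ← Real.rpow_mul (by positivity)]
    congr 1; push_cast; ring
  set A := 4 * √α + 2 * C with hA
  set B := 3 * Real.exp (2 * C) * C * (1 / (4 * α) + 1 / (2 * √α)) + 1 / (2 * √α) with hB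
  have hB0 : 0 < B := by positivity
  have hA0 : 0 < A := by positivity
  constructor
  · rw [← summable_nat_add_iff 1]
    refine Summable.of_nonneg_of_le (fun n => ?_) (fun n => ?_) (hS.mul_left (A ^ 3))
    · exact pow_nonneg (hgap (n + 1) (by omega)).1 3
    · rw [← mul_pow]
      exact pow_le_pow_left₀ (hgap (n + 1) (by omega)).1 (hgap (n + 1) (by omega)).2 3
  · rw [← summable_nat_add_iff 1]
    refine Summable.of_nonneg_of_le (fun n => ?_) (fun n => ?_) (hS.mul_left (A * B ^ 2))
    · exact mul_nonneg (hgap (n + 1) (by omega)).1 (sq_nonneg _)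
    · have h1 := hgap (n + 1) (by omega)
      have h2 := htail (n + 1 + 1) (by omega)
      have h3 : ((n + 1 + 1 : ℕ) : ℝ) ^ (-δ) ≤ ((n + 1 : ℕ) : ℝ) ^ (-δ) := by
        apply Real.rpow_le_rpow_of_nonpos (by positivity) _ (by linarith)
        push_cast; linarith
      have h4 := h2.trans (mul_le_mul_of_nonneg_left h3 hB0.le)
      have h5 := pow_le_pow_left₀ (abs_nonneg _) h4 2
      rw [sq_abs] at h5
      calc _ ≤ (A * ((n + 1 : ℕ) : ℝ) ^ (-δ)) * (B * ((n + 1 : ℕ) : ℝ) ^ (-δ)) ^ 2 :=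
            mul_le_mul h1.2 h5 (sq_nonneg _) (by positivity)
        _ = _ := by ring
end
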